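/- arXiv:2504.11296 — 8 statements merged into one kernel-verified Lean document; each statement's English description precedes it below -/
import Mathlib

section
/- Let B_m : ℝ² → ℝ (m ∈ ℤ) be smooth functions of (x, y) such that for every m ∈ ℤ the first two flows of the Volterra hierarchy hold: ∂_x B_m = B_m (B_{m+1} − B_{m−1}) and ∂_y B_m = B_m (V4_{m+1} − V4_{m−1}). Then for every n ∈ ℤ the functions φ := B_n and ψ := B_{n−1} satisfy the system of conservation laws ∂_y φ = ∂_x (φ² + 2 φ ψ + ∂_x φ) and ∂_y ψ = ∂_x (ψ² + 2 φ ψ − ∂_x ψ). -/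
/-!
By the product rule, the first flow alone gives `∂ₓ V4 m = B m * (V4 (m + 1) - V4 (m - 1))`, which
is the right-hand side of the second flow. Hence `∂_y (B m) = ∂ₓ (V4 m)`. Using the first flow to
eliminate the outer neighbours `B (n + 1)` from `V4 n` and `B (n - 2)` from `V4 (n - 1)` expresses
these fluxes through `φ = B n`, `ψ = B (n - 1)` and their `x`-derivatives.
-/

/-- The quantity `V4` of the Volterra hierarchy, whose lattice differences drive the second flow.
For a sequence of functions the operations are pointwise, and the value is again a function. -/
def volterraV4 {R : Type*} [Mul R] [Add R] (b : ℤ → R) (m : ℤ) : R :=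
  b m * (b (m - 1) + b m + b (m + 1))

section Ring

variable {R : Type*} [CommRing R] (b : ℤ → R) (m : ℤ)

theorem volterraV4_eq_sq_add :
    volterraV4 b m = b m ^ 2 + 2 * b m * b (m - 1) + b m * (b (m + 1) - b (m - 1)) := by
  rw [volterraV4]
  ring

theorem volterraV4_eq_sq_sub :
    volterraV4 b m = b m ^ 2 + 2 * b (m + 1) * b m - b m * (b (m + 1) - b (m - 1)) := by
  rw [volterraV4]
  ring

theorem mul_volterraV4_sub_volterraV4 :
    b m * (volterraV4 b (m + 1) - volterraV4 b (m - 1)) =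
      b m * (b (m + 1) - b (m - 1)) * (b (m - 1) + b m + b (m + 1)) +
        b m * (b (m - 1) * (b m - b (m - 1 - 1)) + b m * (b (m + 1) - b (m - 1)) +
          b (m + 1) * (b (m + 1 + 1) - b m)) := by
  simp only [volterraV4, sub_add_cancel, add_sub_cancel_right]
  ring

end Ring

section Flow

variable {𝕜 A : Type*} [NontriviallyNormedField 𝕜]

/-- The lattice equation `b m' = b m * (c (m + 1) - c (m - 1))`. The first Volterra flow is the case
`c = b`, and the second is the case `c = volterraV4 b`. Differentiability of each `b m` is part of
the condition. -/
def IsVolterraFlow [NormedRing A] [NormedAlgebra 𝕜 A] (b c : ℤ → 𝕜 → A) : Prop :=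
  ∀ m t, HasDerivAt (b m) (b m t * (c (m + 1) t - c (m - 1) t)) t

namespace IsVolterraFlow

theorem of_deriv [NormedRing A] [NormedAlgebra 𝕜 A] {b c : ℤ → 𝕜 → A}
    (hb : ∀ m, Differentiable 𝕜 (b m))
    (h : ∀ m t, deriv (b m) t = b m t * (c (m + 1) t - c (m - 1) t)) : IsVolterraFlow b c :=
  fun m t ↦ h m t ▸ (hb m t).hasDerivAt

variable [NormedCommRing A] [NormedAlgebra 𝕜 A] {b : ℤ → 𝕜 → A}

theorem hasDerivAt_volterraV4 (hb : IsVolterraFlow b b) (m : ℤ) (t : 𝕜) :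
    HasDerivAt (volterraV4 b m) (b m t * (volterraV4 b (m + 1) t - volterraV4 b (m - 1) t)) t := by
  have product_rule := (hb m t).mul (((hb (m - 1) t).add (hb m t)).add (hb (m + 1) t))
  simp only [sub_add_cancel, add_sub_cancel_right] at product_rule
  exact product_rule.congr_deriv (congrFun (mul_volterraV4_sub_volterraV4 b m) t).symm

theorem sq_add_deriv_eq_volterraV4 (hb : IsVolterraFlow b b) (m : ℤ) :
    (fun t ↦ b m t ^ 2 + 2 * b m t * b (m - 1) t + deriv (b m) t) = volterraV4 b m := by
  funext t
  rw [(hb m t).deriv]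
  exact (congrFun (volterraV4_eq_sq_add b m) t).symm

theorem sq_sub_deriv_eq_volterraV4 (hb : IsVolterraFlow b b) (m : ℤ) :
    (fun t ↦ b m t ^ 2 + 2 * b (m + 1) t * b m t - deriv (b m) t) = volterraV4 b m := by
  funext t
  rw [(hb m t).deriv]
  exact (congrFun (volterraV4_eq_sq_sub b m) t).symm

end IsVolterraFlow

variable [NormedCommRing A] [NormedAlgebra 𝕜 A] {B : ℤ → 𝕜 → 𝕜 → A}

theorem deriv_eq_deriv_volterraV4
    (hx : ∀ y, IsVolterraFlow (fun m x ↦ B m x y) (fun m x ↦ B m x y))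
    (hy : ∀ x, IsVolterraFlow (fun m ↦ B m x) (volterraV4 fun m ↦ B m x)) (m : ℤ) (x y : 𝕜) :
    deriv (B m x) y = deriv (volterraV4 (fun k x' ↦ B k x' y) m) x :=
  (hy x m y).deriv.trans ((hx y).hasDerivAt_volterraV4 m x).deriv.symm

theorem volterra_first_two_flows_conservation_laws_general
    (hx : ∀ y, IsVolterraFlow (fun m x ↦ B m x y) (fun m x ↦ B m x y))
    (hy : ∀ x, IsVolterraFlow (fun m ↦ B m x) (volterraV4 fun m ↦ B m x)) (n : ℤ) (x y : 𝕜) :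
    deriv (fun y' ↦ B n x y') y =
      deriv (fun x' ↦
        B n x' y ^ 2 + 2 * B n x' y * B (n - 1) x' y
          + deriv (fun x'' ↦ B n x'' y) x') x
    ∧
    deriv (fun y' ↦ B (n - 1) x y') y =
      deriv (fun x' ↦
        B (n - 1) x' y ^ 2 + 2 * B n x' y * B (n - 1) x' y
          - deriv (fun x'' ↦ B (n - 1) x'' y) x') x := by
  have flux_φ := (hx y).sq_add_deriv_eq_volterraV4 n
  have flux_ψ := (hx y).sq_sub_deriv_eq_volterraV4 (n - 1)
  rw [sub_add_cancel] at flux_ψ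
  rw [flux_φ, flux_ψ]
  exact ⟨deriv_eq_deriv_volterraV4 hx hy n x y, deriv_eq_deriv_volterraV4 hx hy (n - 1) x y⟩

end Flow

/-- If the family `B m` solves the first two flows of the Volterra
hierarchy (with respect to `x = t₂` and `y = t₄`), then for every `n` the pair
`φ = B n`, `ψ = B (n-1)` satisfies the stated system of conservation laws. -/
theorem volterra_first_two_flows_conservation_laws
    (B V4 : ℤ → ℝ → ℝ → ℝ)
    (hB : ∀ m : ℤ, ContDiff ℝ (⊤ : ℕ∞) (fun p : ℝ × ℝ => B m p.1 p.2))
    (hV4 : ∀ (m : ℤ) (x y : ℝ),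
      V4 m x y = B m x y * (B (m - 1) x y + B m x y + B (m + 1) x y))
    (hx : ∀ (m : ℤ) (x y : ℝ),
      deriv (fun x' => B m x' y) x = B m x y * (B (m + 1) x y - B (m - 1) x y))
    (hy : ∀ (m : ℤ) (x y : ℝ),
      deriv (fun y' => B m x y') y = B m x y * (V4 (m + 1) x y - V4 (m - 1) x y))
    (n : ℤ) (x y : ℝ) :
    deriv (fun y' => B n x y') y =
      deriv (fun x' =>
        B n x' y ^ 2 + 2 * B n x' y * B (n - 1) x' y
          + deriv (fun x'' => B n x'' y) x') x
    ∧
    deriv (fun y' => B (n - 1) x y') y =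
      deriv (fun x' =>
        B (n - 1) x' y ^ 2 + 2 * B n x' y * B (n - 1) x' y
          - deriv (fun x'' => B (n - 1) x'' y) x') x := by
  have flow_x (y : ℝ) : IsVolterraFlow (fun m x ↦ B m x y) fun m x ↦ B m x y :=
    .of_deriv (fun m ↦ ((hB m).comp (contDiff_prodMk_left y)).differentiable (by simp))
      fun m x ↦ hx m x y
  have flow_y (x : ℝ) : IsVolterraFlow (fun m ↦ B m x) (volterraV4 fun m ↦ B m x) :=
    .of_deriv (fun m ↦ ((hB m).comp (contDiff_prodMk_right x)).differentiable (by simp))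
      fun m y ↦ by
        simpa only [hV4, volterraV4, Pi.mul_apply, Pi.add_apply] using hy m x y
  exact volterra_first_two_flows_conservation_laws_general flow_x flow_y n x y
end

section
/- Define the skew-symmetric inner product ⟨f, g⟩ := (1/2) ∫_{ℝ²} f(x) g(y) sgn(y − x) exp(−(x² + y²)/2) dx dy, and the polynomials Q_{2n}(z) := P_{2n}(z) and Q_{2n+1}(z) := P_{2n+1}(z) − n P_{2n−1}(z) for n ≥ 0. Then the family {Qₙ} is skew-orthogonal: for all m, n ≥ 0, ⟨Q_{2m}, Q_{2n}⟩ = 0, ⟨Q_{2m+1}, Q_{2n+1}⟩ = 0, and ⟨Q_{2m}, Q_{2n+1}⟩ = ν_n if m = n and 0 otherwise. -/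
/-!
Under the weight `exp (-x² / 2)`, the form `⟨f, g⟩` inverts differentiation: integration in `y`
against `sgn (y - x) / 2` sends `G'` to `-G x` whenever `G` and `G'` are integrable. Since
`(q exp (-x² / 2))' = -(x q - q') exp (-x² / 2)`, this gives `⟨f, x q - q'⟩ = ∫ f q exp (-x²)`.
The odd member `Q_{2n+1}` is exactly `x P_{2n} - P_{2n}'`, so `⟨Q_{2m}, Q_{2n+1}⟩` is the ordinary
Hermite inner product of `P_{2m}` and `P_{2n}`. The other two pairings vanish by parity, because the
form changes sign under `(x, y) ↦ (-x, -y)`.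
-/

open MeasureTheory

noncomputable section

/-- Monic Hermite polynomials for the weight `exp(−x²)`:
`P₀ = 1`, `P₁ = X`, `P_{n+1} = X P_n − (n/2) P_{n−1}`. -/
def hermiteP : ℕ → Polynomial ℝ
  | 0 => 1
  | 1 => Polynomial.X
  | n + 2 => Polynomial.X * hermiteP (n + 1) - Polynomial.C ((n + 1 : ℝ) / 2) * hermiteP n

/-- The normalisation constants `ν_n = √π (2n)! / 2^{2n}`. -/
def nuGOE (n : ℕ) : ℝ := Real.sqrt Real.pi * (2 * n).factorial / 2 ^ (2 * n)

/-- The monic skew-orthogonal polynomials: `Q_{2n} = P_{2n}` and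
`Q_{2n+1} = P_{2n+1} − n P_{2n−1}`. -/
def QGOE (m : ℕ) : Polynomial ℝ :=
  if m % 2 = 0 then hermiteP m
  else hermiteP m - Polynomial.C ((m / 2 : ℕ) : ℝ) * hermiteP (m - 2)

/-- The skew-symmetric inner product
`⟨f, g⟩ = (1/2) ∫_{ℝ²} f(x) g(y) sgn(y − x) exp(−(x² + y²)/2) dx dy`. -/
def skewInner (f g : Polynomial ℝ) : ℝ :=
  (1 / 2) *
    ∫ p : ℝ × ℝ,
      f.eval p.1 * g.eval p.2 * Real.sign (p.2 - p.1) *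
        Real.exp (-(p.1 ^ 2 + p.2 ^ 2) / 2)

section SignKernel

open Set

lemma measurable_real_sign : Measurable Real.sign :=
  Measurable.ite measurableSet_Iio measurable_const
    (Measurable.ite measurableSet_Ioi measurable_const measurable_const)

lemma abs_real_sign_le_one (x : ℝ) : |Real.sign x| ≤ 1 := by
  rcases Real.sign_apply_eq x with h | h | h <;> simp [h]

lemma integrable_mul_real_sign {α : Type*} [MeasurableSpace α] {μ : Measure α} {f u : α → ℝ}
    (hf : Integrable f μ) (hu : Measurable u) :
    Integrable (fun a => f a * Real.sign (u a)) μ :=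
  hf.mul_bdd (measurable_real_sign.comp hu).aestronglyMeasurable
    (.of_forall fun _ => abs_real_sign_le_one _)

lemma integral_mul_real_sign_sub {g : ℝ → ℝ} (hg : Integrable g) (x : ℝ) :
    ∫ y, g y * Real.sign (y - x) = (∫ y in Ioi x, g y) - ∫ y in Iic x, g y := by
  have hint : Integrable fun y => g y * Real.sign (y - x) :=
    integrable_mul_real_sign hg (measurable_id.sub_const x)
  have hright : ∫ y in Ioi x, g y * Real.sign (y - x) = ∫ y in Ioi x, g y :=
    setIntegral_congr_fun measurableSet_Ioi fun y hy => by
      simp [Real.sign_of_pos (sub_pos.2 hy)]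
  have hleft : ∫ y in Iic x, g y * Real.sign (y - x) = -∫ y in Iic x, g y := by
    rw [integral_Iic_eq_integral_Iio, integral_Iic_eq_integral_Iio, ← integral_neg]
    exact setIntegral_congr_fun measurableSet_Iio fun y hy => by
      simp [Real.sign_of_neg (sub_neg.2 hy)]
  rw [← intervalIntegral.integral_Iic_add_Ioi (b := x) hint.integrableOn hint.integrableOn,
    hleft, hright]
  ring

variable {f G G' : ℝ → ℝ}

lemma integral_deriv_mul_real_sign_sub (hderiv : ∀ y, HasDerivAt G (G' y) y)
    (hG' : Integrable G') (hG : Integrable G) (x : ℝ) :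
    ∫ y, G' y * Real.sign (y - x) = -2 * G x := by
  have hright : ∫ y in Ioi x, G' y = 0 - G x :=
    integral_Ioi_of_hasDerivAt_of_tendsto' (fun y _ => hderiv y) hG'.integrableOn
      (tendsto_zero_of_hasDerivAt_of_integrableOn_Ioi (a := x) (fun y _ => hderiv y)
        hG'.integrableOn hG.integrableOn)
  have hleft : ∫ y in Iic x, G' y = G x - 0 :=
    integral_Iic_of_hasDerivAt_of_tendsto' (fun y _ => hderiv y) hG'.integrableOn
      (tendsto_zero_of_hasDerivAt_of_integrableOn_Iic (a := x) (fun y _ => hderiv y)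
        hG'.integrableOn hG.integrableOn)
  rw [integral_mul_real_sign_sub hG', hright, hleft]
  ring

lemma integral_prod_mul_deriv_mul_real_sign_sub (hf : Integrable f)
    (hderiv : ∀ y, HasDerivAt G (G' y) y) (hG' : Integrable G') (hG : Integrable G) :
    ∫ p : ℝ × ℝ, f p.1 * G' p.2 * Real.sign (p.2 - p.1) = -2 * ∫ x, f x * G x := by
  have hint : Integrable (fun p : ℝ × ℝ => f p.1 * G' p.2 * Real.sign (p.2 - p.1))
      (volume.prod volume) :=
    integrable_mul_real_sign (hf.mul_prod hG') (measurable_snd.sub measurable_fst)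
  calc ∫ p : ℝ × ℝ, f p.1 * G' p.2 * Real.sign (p.2 - p.1)
      = ∫ x, ∫ y, f x * G' y * Real.sign (y - x) := integral_prod _ hint
    _ = ∫ x, -2 * (f x * G x) := by
        simp only [mul_assoc, integral_const_mul,
          integral_deriv_mul_real_sign_sub hderiv hG' hG, mul_left_comm]
    _ = -2 * ∫ x, f x * G x := integral_const_mul _ _

end SignKernel

section GaussianWeight

open Polynomial

lemma integrable_eval_mul_exp_neg_mul_sq {b : ℝ} (hb : 0 < b) (p : ℝ[X]) :
    Integrable fun x : ℝ => p.eval x * Real.exp (-b * x ^ 2) := by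
  simp_rw [eval_eq_sum_range, Finset.sum_mul, mul_assoc]
  refine integrable_finsetSum _ fun i _ => Integrable.const_mul ?_ _
  have hi : (-1 : ℝ) < i := neg_one_lt_zero.trans_le i.cast_nonneg
  simpa only [Real.rpow_natCast] using integrable_rpow_mul_exp_neg_mul_sq hb hi

lemma hasDerivAt_eval_mul_exp_neg_mul_sq (b : ℝ) (p : ℝ[X]) (x : ℝ) :
    HasDerivAt (fun x : ℝ => p.eval x * Real.exp (-b * x ^ 2))
      ((derivative p - C (2 * b) * (X * p)).eval x * Real.exp (-b * x ^ 2)) x := by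
  have hexp : HasDerivAt (fun x : ℝ => Real.exp (-b * x ^ 2))
      (Real.exp (-b * x ^ 2) * (-b * (2 * x))) x := by
    simpa using ((hasDerivAt_pow 2 x).const_mul (-b)).exp
  refine ((p.hasDerivAt x).mul hexp).congr_deriv ?_
  simp only [eval_sub, eval_mul, eval_C, eval_X]
  ring

/-- The moment functional `p ↦ ∫ p(x) exp(-b x²) dx` of the Gaussian weight with parameter `b`;
`hermiteP` is orthogonal with respect to the case `b = 1`. -/
def gaussianIntegral {b : ℝ} (hb : 0 < b) : ℝ[X] →ₗ[ℝ] ℝ where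
  toFun p := ∫ x : ℝ, p.eval x * Real.exp (-b * x ^ 2)
  map_add' p q := by
    rw [← integral_add (integrable_eval_mul_exp_neg_mul_sq hb p)
      (integrable_eval_mul_exp_neg_mul_sq hb q)]
    simp only [eval_add, add_mul]
  map_smul' c p := by
    simp only [eval_smul, smul_eq_mul, mul_assoc, integral_const_mul, RingHom.id_apply]

variable {b : ℝ} (hb : 0 < b)

lemma gaussianIntegral_apply (p : ℝ[X]) :
    gaussianIntegral hb p = ∫ x : ℝ, p.eval x * Real.exp (-b * x ^ 2) :=
  rfl

lemma gaussianIntegral_C_mul (c : ℝ) (p : ℝ[X]) :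
    gaussianIntegral hb (C c * p) = c * gaussianIntegral hb p := by
  rw [← smul_eq_C_mul, map_smul, smul_eq_mul]

lemma gaussianIntegral_one : gaussianIntegral hb 1 = √(Real.pi / b) := by
  simpa [gaussianIntegral_apply] using integral_gaussian b

lemma gaussianIntegral_derivative (p : ℝ[X]) :
    gaussianIntegral hb (derivative p) = 2 * b * gaussianIntegral hb (X * p) := by
  have htotal : gaussianIntegral hb (derivative p - C (2 * b) * (X * p)) = 0 :=
    integral_eq_zero_of_hasDerivAt_of_integrable (hasDerivAt_eval_mul_exp_neg_mul_sq b p)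
      (integrable_eval_mul_exp_neg_mul_sq hb _) (integrable_eval_mul_exp_neg_mul_sq hb _)
  rwa [map_sub, gaussianIntegral_C_mul, sub_eq_zero] at htotal

end GaussianWeight

section Hermite

open Polynomial

lemma derivative_hermiteP_succ : ∀ n : ℕ,
    derivative (hermiteP (n + 1)) = C (n + 1 : ℝ) * hermiteP n
  | 0 => by simp [hermiteP]
  | 1 => by simp [hermiteP, ← two_mul, map_ofNat C 2]
  | n + 2 => by
    rw [hermiteP, derivative_sub, derivative_mul, derivative_C_mul,
      derivative_hermiteP_succ (n + 1), derivative_hermiteP_succ n, hermiteP]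
    refine Polynomial.funext fun x => ?_
    simp only [eval_add, eval_sub, eval_mul, eval_C, eval_X, derivative_X, eval_one]
    push_cast
    ring

lemma derivative_hermiteP (n : ℕ) :
    derivative (hermiteP n) = C (n : ℝ) * hermiteP (n - 1) := by
  cases n with
  | zero => simp [hermiteP]
  | succ n => simpa using derivative_hermiteP_succ n

lemma hermiteP_succ (n : ℕ) :
    hermiteP (n + 1) = X * hermiteP n - C (1 / 2) * derivative (hermiteP n) := by
  cases n with
  | zero => simp [hermiteP]
  | succ n =>
    rw [derivative_hermiteP_succ, hermiteP, ← mul_assoc, ← C_mul, one_div_mul_eq_div]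

lemma hermiteP_comp_neg_X : ∀ n : ℕ, (hermiteP n).comp (-X) = (-1 : ℝ) ^ n • hermiteP n
  | 0 => by simp [hermiteP]
  | 1 => by simp [hermiteP]
  | n + 2 => by
    simp only [hermiteP, sub_comp, mul_comp, X_comp, C_comp, hermiteP_comp_neg_X (n + 1),
      hermiteP_comp_neg_X n, smul_eq_C_mul, map_pow, map_neg, map_one]
    ring

lemma gaussianIntegral_mul_hermiteP_succ (q : ℝ[X]) (n : ℕ) :
    gaussianIntegral one_pos (q * hermiteP (n + 1)) =
      gaussianIntegral one_pos (derivative q * hermiteP n) / 2 := by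
  have hexpand : q * hermiteP (n + 1) =
      X * (q * hermiteP n) - C (1 / 2) * (q * derivative (hermiteP n)) := by
    rw [hermiteP_succ]
    ring
  have hparts := gaussianIntegral_derivative one_pos (q * hermiteP n)
  rw [derivative_mul, map_add] at hparts
  rw [hexpand, map_sub, gaussianIntegral_C_mul]
  linarith

lemma gaussianIntegral_hermiteP_succ (n : ℕ) :
    gaussianIntegral one_pos (hermiteP (n + 1)) = 0 := by
  simpa using gaussianIntegral_mul_hermiteP_succ 1 n

lemma gaussianIntegral_hermiteP_mul_hermiteP : ∀ m n : ℕ,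
    gaussianIntegral one_pos (hermiteP m * hermiteP n) =
      if m = n then √Real.pi * n.factorial / 2 ^ n else 0
  | 0, 0 => by simp [hermiteP, gaussianIntegral_one]
  | 0, n + 1 => by simp [hermiteP.eq_1, gaussianIntegral_hermiteP_succ]
  | m + 1, 0 => by simp [hermiteP.eq_1, gaussianIntegral_hermiteP_succ]
  | m + 1, n + 1 => by
    rw [gaussianIntegral_mul_hermiteP_succ, derivative_hermiteP_succ, mul_assoc,
      gaussianIntegral_C_mul, gaussianIntegral_hermiteP_mul_hermiteP m n]
    rcases eq_or_ne m n with rfl | hmn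
    · simp only [if_true, Nat.factorial_succ, pow_succ, Nat.cast_mul, Nat.cast_succ]
      ring
    · simp [hmn]

end Hermite

section SkewOrthogonal

open Polynomial

lemma QGOE_two_mul (n : ℕ) : QGOE (2 * n) = hermiteP (2 * n) := by
  simp [QGOE]

lemma QGOE_two_mul_add_one (n : ℕ) :
    QGOE (2 * n + 1) = X * hermiteP (2 * n) - derivative (hermiteP (2 * n)) := by
  have hmod : (2 * n + 1) % 2 ≠ 0 := by omega
  have hdiv : (2 * n + 1) / 2 = n := by omega
  have hhalf : C (n : ℝ) * hermiteP (2 * n + 1 - 2) =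
      C (1 / 2) * derivative (hermiteP (2 * n)) := by
    rw [derivative_hermiteP, ← mul_assoc, ← C_mul]
    congr 2
    push_cast
    ring
  rw [QGOE, if_neg hmod, hdiv, hhalf, hermiteP_succ, sub_sub, ← add_mul, ← C_add]
  norm_num

lemma QGOE_comp_neg_X (m : ℕ) : (QGOE m).comp (-X) = (-1 : ℝ) ^ m • QGOE m := by
  obtain ⟨n, rfl | rfl⟩ := m.even_or_odd'
  · rw [QGOE_two_mul, hermiteP_comp_neg_X]
  · have hderiv : (derivative (hermiteP (2 * n))).comp (-X) = -derivative (hermiteP (2 * n)) := by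
      have hchain := derivative_comp (hermiteP (2 * n)) (-X)
      rw [hermiteP_comp_neg_X, (even_two_mul n).neg_one_pow, one_smul, derivative_neg,
        derivative_X, neg_one_mul] at hchain
      exact (neg_eq_iff_eq_neg.2 hchain).symm
    rw [QGOE_two_mul_add_one, sub_comp, mul_comp, X_comp, hermiteP_comp_neg_X, hderiv,
      (even_two_mul n).neg_one_pow, (odd_two_mul_add_one n).neg_one_pow, one_smul, neg_one_smul]
    ring

lemma skewInner_smul_left (c : ℝ) (f g : ℝ[X]) :
    skewInner (c • f) g = c * skewInner f g := by
  simp only [skewInner, eval_smul, smul_eq_mul, mul_assoc, integral_const_mul]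
  ring

lemma skewInner_smul_right (c : ℝ) (f g : ℝ[X]) :
    skewInner f (c • g) = c * skewInner f g := by
  simp only [skewInner, eval_smul, smul_eq_mul, mul_assoc, mul_left_comm _ c, integral_const_mul]

lemma skewInner_comp_neg_X (f g : ℝ[X]) :
    skewInner (f.comp (-X)) (g.comp (-X)) = -skewInner f g := by
  have hsign (x y : ℝ) : Real.sign (-y - -x) = -Real.sign (y - x) := by
    rw [← Real.sign_neg, neg_sub_neg, neg_sub]
  rw [skewInner, skewInner, ← integral_neg_eq_self, ← mul_neg, ← integral_neg]
  simp only [eval_comp, eval_neg, eval_X, Prod.fst_neg, Prod.snd_neg, neg_neg, neg_sq, hsign,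
    mul_neg, neg_mul]

lemma skewInner_QGOE_eq_zero_of_even_add {m n : ℕ} (hmn : Even (m + n)) :
    skewInner (QGOE m) (QGOE n) = 0 := by
  have h := skewInner_comp_neg_X (QGOE m) (QGOE n)
  rw [QGOE_comp_neg_X, QGOE_comp_neg_X, skewInner_smul_left, skewInner_smul_right,
    ← mul_assoc, ← pow_add, hmn.neg_one_pow, one_mul] at h
  exact self_eq_neg.1 h

lemma skewInner_eq_integral_prod (f g : ℝ[X]) :
    skewInner f g = 1 / 2 * ∫ p : ℝ × ℝ,
      f.eval p.1 * Real.exp (-(1 / 2) * p.1 ^ 2) * (g.eval p.2 * Real.exp (-(1 / 2) * p.2 ^ 2)) *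
        Real.sign (p.2 - p.1) := by
  have hexp (x y : ℝ) : Real.exp (-(x ^ 2 + y ^ 2) / 2) =
      Real.exp (-(1 / 2) * x ^ 2) * Real.exp (-(1 / 2) * y ^ 2) := by
    rw [← Real.exp_add]
    ring_nf
  rw [skewInner]
  congr! 3 with p
  rw [hexp]
  ring

lemma skewInner_X_mul_sub_derivative (f q : ℝ[X]) :
    skewInner f (X * q - derivative q) = gaussianIntegral one_pos (f * q) := by
  have hb : (0 : ℝ) < 1 / 2 := one_half_pos
  have hderiv (y : ℝ) : HasDerivAt (fun y => (-q).eval y * Real.exp (-(1 / 2) * y ^ 2))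
      ((X * q - derivative q).eval y * Real.exp (-(1 / 2) * y ^ 2)) y := by
    have hpoly : derivative (-q) - C (2 * (1 / 2)) * (X * -q) = X * q - derivative q := by
      rw [derivative_neg, mul_one_div_cancel two_ne_zero, C_1]
      ring
    simpa only [hpoly] using hasDerivAt_eval_mul_exp_neg_mul_sq (1 / 2) (-q) y
  have hexp (x : ℝ) : Real.exp (-1 * x ^ 2) =
      Real.exp (-(1 / 2) * x ^ 2) * Real.exp (-(1 / 2) * x ^ 2) := by
    rw [← Real.exp_add]
    ring_nf
  rw [skewInner_eq_integral_prod, integral_prod_mul_deriv_mul_real_sign_sub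
    (integrable_eval_mul_exp_neg_mul_sq hb f) hderiv
    (integrable_eval_mul_exp_neg_mul_sq hb _) (integrable_eval_mul_exp_neg_mul_sq hb _),
    ← mul_assoc, ← integral_const_mul, gaussianIntegral_apply]
  congr! 2
  rw [hexp, eval_neg, eval_mul]
  ring

end SkewOrthogonal

/-- The family `{Qₙ}` is skew-orthogonal for `⟨·,·⟩`:
`⟨Q_{2m}, Q_{2n}⟩ = 0`, `⟨Q_{2m+1}, Q_{2n+1}⟩ = 0`, and
`⟨Q_{2m}, Q_{2n+1}⟩ = ν_n δ_{mn}`. -/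
theorem QGOE_skew_orthogonal :
    ∀ m n : ℕ,
      skewInner (QGOE (2 * m)) (QGOE (2 * n)) = 0 ∧
      skewInner (QGOE (2 * m + 1)) (QGOE (2 * n + 1)) = 0 ∧
      skewInner (QGOE (2 * m)) (QGOE (2 * n + 1)) = (if m = n then nuGOE n else 0) := by
  intro m n
  refine ⟨skewInner_QGOE_eq_zero_of_even_add (by grind),
    skewInner_QGOE_eq_zero_of_even_add (by grind), ?_⟩
  rw [QGOE_two_mul, QGOE_two_mul_add_one, skewInner_X_mul_sub_derivative,
    gaussianIntegral_hermiteP_mul_hermiteP]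
  simp [nuGOE]

end
end

section
/- Let a, b, h : ℝ² → ℝ be continuously differentiable functions of (x, t) such that: (1) b ∂_x a = a ∂_x b everywhere; (2) ∂_t a = a ∂_x(h b) everywhere; (3) ∂_x(a b + b²) = 0 everywhere; (4) ∂_t b = b ∂_x(h b) everywhere; (5) b(x, t) ≠ 0 for all (x, t); and (6) there exist t₀, x₁, x₂ with b(x₁, t₀)² ≠ b(x₂, t₀)². Then a = −b identically on ℝ². -/
/-!
Where `b ≠ 0`, equality of the products `b a'` and `a b'` says that `a / b` has zero derivative. In
time this holds because `a` and `b` have the same logarithmic rate of change, and on the line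
`t = t₀` it is assumed, so `a = c b` everywhere. Conservation of `a b + b² = (c + 1) b²` along
`t = t₀`, where `b²` takes two values, forces `c = -1`.
-/

section PartialMaps

variable {𝕜 E F G : Type*} [NontriviallyNormedField 𝕜] [NormedAddCommGroup E] [NormedSpace 𝕜 E]
  [NormedAddCommGroup F] [NormedSpace 𝕜 F] [NormedAddCommGroup G] [NormedSpace 𝕜 G] {u : E → F → G}

theorem differentiable_partial_left (hu : Differentiable 𝕜 fun p : E × F => u p.1 p.2) (y : F) :
    Differentiable 𝕜 fun x => u x y :=
  hu.comp (differentiable_id.prodMk (differentiable_const y))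

theorem differentiable_partial_right (hu : Differentiable 𝕜 fun p : E × F => u p.1 p.2) (x : E) :
    Differentiable 𝕜 (u x) :=
  hu.comp ((differentiable_const x).prodMk differentiable_id)

end PartialMaps

section ConstantRatio

variable {𝕜 K : Type*} [RCLike 𝕜] [NontriviallyNormedField K] [NormedAlgebra 𝕜 K] {f g : 𝕜 → K}

theorem div_eq_div_of_deriv_cross_eq (hf : Differentiable 𝕜 f) (hg : Differentiable 𝕜 g)
    (hg₀ : ∀ x, g x ≠ 0) (hcross : ∀ x, g x * deriv f x = f x * deriv g x) (x y : 𝕜) :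
    f x / g x = f y / g y := by
  have hderiv : ∀ z, deriv (fun z => f z / g z) z = 0 := fun z => by
    rw [deriv_fun_div (hf z) (hg z) (hg₀ z), mul_comm, hcross, sub_self, zero_div]
  exact is_const_of_deriv_eq_zero (hf.fun_div hg hg₀) hderiv x y

theorem eq_neg_of_deriv_cross_eq_of_deriv_mul_add_sq_eq_zero
    (hf : Differentiable 𝕜 f) (hg : Differentiable 𝕜 g) (hg₀ : ∀ x, g x ≠ 0)
    (hcross : ∀ x, g x * deriv f x = f x * deriv g x)
    (hconserved : ∀ x, deriv (fun x' => f x' * g x' + g x' ^ 2) x = 0)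
    (hsq : ∃ x₁ x₂, g x₁ ^ 2 ≠ g x₂ ^ 2) (x : 𝕜) :
    f x = -g x := by
  obtain ⟨x₁, x₂, hne⟩ := hsq
  set c := f x / g x
  have hfc (y : 𝕜) : f y = c * g y :=
    (div_eq_iff (hg₀ y)).mp (div_eq_div_of_deriv_cross_eq hf hg hg₀ hcross y x)
  have hconst : f x₁ * g x₁ + g x₁ ^ 2 = f x₂ * g x₂ + g x₂ ^ 2 :=
    is_const_of_deriv_eq_zero ((hf.fun_mul hg).fun_add (hg.fun_pow 2)) hconserved x₁ x₂
  have hfactor : (c + 1) * (g x₁ ^ 2 - g x₂ ^ 2) = 0 := by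
    rw [hfc x₁, hfc x₂] at hconst
    linear_combination hconst
  have hc : c + 1 = 0 := (mul_eq_zero.mp hfactor).resolve_right (sub_ne_zero.mpr hne)
  rw [hfc x, eq_neg_of_add_eq_zero_left hc, neg_one_mul]

theorem singular_limit_leading_order_constraint_general
    {a b rate : 𝕜 → 𝕜 → K} {t₀ : 𝕜}
    (hax : Differentiable 𝕜 fun x => a x t₀) (hbx : Differentiable 𝕜 fun x => b x t₀)
    (hat : ∀ x, Differentiable 𝕜 (a x)) (hbt : ∀ x, Differentiable 𝕜 (b x))
    (hcross : ∀ x, b x t₀ * deriv (fun x' => a x' t₀) x = a x t₀ * deriv (fun x' => b x' t₀) x)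
    (hrate_a : ∀ x t, deriv (a x) t = a x t * rate x t)
    (hconserved : ∀ x, deriv (fun x' => a x' t₀ * b x' t₀ + b x' t₀ ^ 2) x = 0)
    (hrate_b : ∀ x t, deriv (b x) t = b x t * rate x t)
    (hb₀ : ∀ x t, b x t ≠ 0)
    (hsq : ∃ x₁ x₂, b x₁ t₀ ^ 2 ≠ b x₂ t₀ ^ 2) (x t : 𝕜) :
    a x t = -b x t := by
  have hslice : a x t₀ = -b x t₀ :=
    eq_neg_of_deriv_cross_eq_of_deriv_mul_add_sq_eq_zero hax hbx (hb₀ · t₀) hcross hconserved hsq x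
  have hcross_time (s : 𝕜) : b x s * deriv (a x) s = a x s * deriv (b x) s := by
    rw [hrate_a, hrate_b, mul_left_comm]
  have hratio : a x t / b x t = -1 := by
    rw [div_eq_div_of_deriv_cross_eq (hat x) (hbt x) (hb₀ x) hcross_time t t₀, hslice,
      neg_div_self (hb₀ x t₀)]
  rw [(div_eq_iff (hb₀ x t)).mp hratio, neg_one_mul]

end ConstantRatio

/-- The order `ε⁻¹` constraint in the singular continuum limit of the
reduced even Pfaff lattice: under the stated relations for `a = U^{−2}_{−1}`,
`b = U⁰_{−1}`, `h = U¹_0`, one concludes `a = −b` identically. -/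
theorem singular_limit_leading_order_constraint
    (a b h : ℝ → ℝ → ℝ)
    (ha : ContDiff ℝ 1 (fun p : ℝ × ℝ => a p.1 p.2))
    (hb : ContDiff ℝ 1 (fun p : ℝ × ℝ => b p.1 p.2))
    (hh : ContDiff ℝ 1 (fun p : ℝ × ℝ => h p.1 p.2))
    (h1 : ∀ x t : ℝ,
      b x t * deriv (fun x' => a x' t) x = a x t * deriv (fun x' => b x' t) x)
    (h2 : ∀ x t : ℝ,
      deriv (fun t' => a x t') t = a x t * deriv (fun x' => h x' t * b x' t) x)
    (h3 : ∀ x t : ℝ,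
      deriv (fun x' => a x' t * b x' t + (b x' t) ^ 2) x = 0)
    (h4 : ∀ x t : ℝ,
      deriv (fun t' => b x t') t = b x t * deriv (fun x' => h x' t * b x' t) x)
    (h5 : ∀ x t : ℝ, b x t ≠ 0)
    (h6 : ∃ t₀ x₁ x₂ : ℝ, (b x₁ t₀) ^ 2 ≠ (b x₂ t₀) ^ 2) :
    ∀ x t : ℝ, a x t = - b x t := by
  obtain ⟨t₀, hsq⟩ := h6
  have ha' := ha.differentiable one_ne_zero
  have hb' := hb.differentiable one_ne_zero
  exact singular_limit_leading_order_constraint_general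
    (differentiable_partial_left ha' t₀) (differentiable_partial_left hb' t₀)
    (differentiable_partial_right ha') (differentiable_partial_right hb')
    (h1 · t₀) h2 (h3 · t₀) h4 h5 hsq
end

section
/- Let A = A(u) be the coefficient matrix of the hydrodynamic chain (entries listed in the context), depending on u : ℤ → ℝ. For i, j, k ∈ ℤ define the Nijenhuis tensor N^i_{jk}(u) := Σ_p ( A^p_j ∂_p A^i_k − A^p_k ∂_p A^i_j ) − Σ_p A^i_p ( ∂_j A^p_k − ∂_k A^p_j ) and the Haantjes tensor H^i_{jk}(u) := Σ_{p,r} ( N^i_{pr} A^p_j A^r_k − N^p_{jr} A^i_p A^r_k − N^p_{rk} A^i_p A^r_j + N^p_{jk} A^i_r A^r_p ), where ∂_m denotes the derivative of an entry with respect to the coordinate u^m (each entry is a polynomial in finitely many coordinates, so ∂_m F(u) := d/ds F(u + s·e_m)|_{s=0} with e_m the indicator function of m), and all the sums over ℤ have only finitely many nonzero terms. Then for every u : ℤ → ℝ and all i, j, k ∈ ℤ, H^i_{jk}(u) = 0; i.e., the Haantjes tensor of the hydrodynamic chain vanishes identically, so the chain is diagonalisable. -/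
noncomputable section

/-- The coefficient matrix `A(u)` of the hydrodynamic chain arising as the continuum
limit of the reduced even Pfaff lattice; rows `i ∈ ℤ`, columns `j ∈ ℤ`
(entries prescribed by two rules at the same position are added). -/
def Achain (u : ℤ → ℝ) (i j : ℤ) : ℝ :=
  (if i = 0 ∧ j = 0 then u 0 * u 1 else 0)
  + (if i = 0 ∧ j = 1 then (u 0) ^ 2 else 0)
  + (if i = 1 ∧ j = 0 then 2 * u 2 - (u 1) ^ 2 else 0)
  + (if 2 ≤ i ∧ j = 0 then
      ((i : ℝ) + 1) * u (i + 1) - ((i : ℝ) - 1) * u (i - 1) - u i * u 1 else 0)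
  + (if 1 ≤ i ∧ j = 1 then -(u 0 * u i) else 0)
  + (if 1 ≤ i ∧ j = i + 1 then u 0 else 0)
  + (if 2 ≤ i ∧ j = i - 1 then u 0 else 0)
  + (if i = -1 ∧ j = 0 then u (-1) * u 1 + u (-2) else 0)
  + (if i = -2 ∧ j = 0 then u (-2) * u 1 + 2 * u (-3) else 0)
  + (if i ≤ -3 ∧ j = 0 then
      u i * u 1 + (-(i : ℝ)) * u (i - 1) - (-(i : ℝ) - 2) * u (i + 1) else 0)
  + (if i ≤ -1 ∧ j = 1 then u 0 * u i else 0)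
  + (if i ≤ -1 ∧ j = i - 1 then u 0 else 0)
  + (if i = -2 ∧ j = -1 then 2 * u 0 else 0)
  + (if i ≤ -3 ∧ j = i + 1 then u 0 else 0)

/-- The partial derivative `∂_m F(u)` of a functional of `u : ℤ → ℝ` with respect to the
coordinate `u^m`: the derivative at `s = 0` of `s ↦ F(u + s·e_m)`. -/
def pderivU (F : (ℤ → ℝ) → ℝ) (u : ℤ → ℝ) (m : ℤ) : ℝ :=
  deriv (fun s : ℝ => F (fun i => u i + s * (if i = m then 1 else 0))) 0

/-- The Nijenhuis tensor `N^i_{jk}(u)` of the matrix `A(u)`; all the sums over `ℤ`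
have only finitely many nonzero terms. -/
def nijenhuis (u : ℤ → ℝ) (i j k : ℤ) : ℝ :=
  (∑ᶠ p : ℤ,
      (Achain u p j * pderivU (fun v => Achain v i k) u p
        - Achain u p k * pderivU (fun v => Achain v i j) u p))
    - ∑ᶠ p : ℤ,
        Achain u i p *
          (pderivU (fun v => Achain v p k) u j - pderivU (fun v => Achain v p j) u k)

/-- The Haantjes tensor `H^i_{jk}(u)` of the matrix `A(u)`. -/
def haantjes (u : ℤ → ℝ) (i j k : ℤ) : ℝ :=
  ∑ᶠ p : ℤ, ∑ᶠ r : ℤ,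
    (nijenhuis u i p r * Achain u p j * Achain u r k
      - nijenhuis u p j r * Achain u i p * Achain u r k
      - nijenhuis u p r k * Achain u i p * Achain u r j
      + nijenhuis u p j k * Achain u i r * Achain u r p)

/-!
The chain matrix is a quadratic family of operators `A(u) = α ⊗ S u + β ⊗ K u + u⁰ M` on `ℤ → ℝ`,
where `β = du⁰`, `α = d(u⁰u¹)`, `S` flips the sign of the coordinates of positive index, and `K`,
`M` only couple neighbouring coordinates. The relations `S² = 1`, `SK = KS`, `SM = MS` and
`KM - MK + M² = 4 (1 - e₀ ⊗ β)` collapse the Nijenhuis torsion to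
`N(X, Y) = α(X) A Y - α(Y) A X - 4 u⁰ (β(X) Y - β(Y) X)`. Any `N(X, Y) = α(X) B Y - α(Y) B X` with
`B` commuting with `A` satisfies `N(AX, AY) - A N(X, AY) - A N(AX, Y) + A² N(X, Y) = 0`. Columns of
`A` have infinitely many nonzero entries but rows do not, so `A` acts on all of `ℤ → ℝ` and sums
over indices are evaluations of finite combinations of coordinates.
-/

section FiniteSums

variable {ι R : Type*} [CommRing R]

/-- The finitely supported family `f` has sum `a`; unlike a bare equation between `finsum`s, this
is stable under addition. -/
def HasFinsum (f : ι → R) (a : R) : Prop :=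
  f.HasFiniteSupport ∧ ∑ᶠ i, f i = a

lemma HasFinsum.add {f g : ι → R} {a b : R} (hf : HasFinsum f a) (hg : HasFinsum g b) :
    HasFinsum (fun i => f i + g i) (a + b) :=
  ⟨hf.1.add hg.1, by rw [finsum_add_distrib hf.1 hg.1, hf.2, hg.2]⟩

lemma HasFinsum.sub {f g : ι → R} {a b : R} (hf : HasFinsum f a) (hg : HasFinsum g b) :
    HasFinsum (fun i => f i - g i) (a - b) :=
  ⟨hf.1.sub hg.1, by rw [finsum_sub_distrib hf.1 hg.1, hf.2, hg.2]⟩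

lemma HasFinsum.const_mul {f : ι → R} {a : R} (c : R) (hf : HasFinsum f a) :
    HasFinsum (fun i => c * f i) (c * a) :=
  ⟨hf.1.fun_comp (g := (c * ·)) (mul_zero c), by rw [← mul_finsum' f c hf.1, hf.2]⟩

lemma hasFinsum_of_forall_ne_eq_zero {f : ι → R} (i : ι) (hf : ∀ p, p ≠ i → f p = 0) :
    HasFinsum f (f i) :=
  ⟨(Set.finite_singleton i).subset fun p hp => by_contra fun hne => hp (hf p hne),
    finsum_eq_single f i hf⟩

/-- The coordinate functional `v ↦ v i`. -/
abbrev coord (i : ι) : Module.Dual R (ι → R) :=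
  LinearMap.proj i

variable (R ι) in
/-- The functionals on `ι → R` that are finite combinations of coordinates. -/
def coordinateSpan : Submodule R (Module.Dual R (ι → R)) :=
  Submodule.span R (Set.range coord)

lemma coord_mem_coordinateSpan (i : ι) : coord i ∈ coordinateSpan ι R :=
  Submodule.subset_span ⟨i, rfl⟩

lemma hasFinsum_of_mem_coordinateSpan [DecidableEq ι] {l : Module.Dual R (ι → R)}
    (hl : l ∈ coordinateSpan ι R) (v : ι → R) :
    HasFinsum (fun p => l (Pi.single p 1) * v p) (l v) := by
  induction hl using Submodule.span_induction with
  | mem l hl =>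
    obtain ⟨i, rfl⟩ := hl
    simpa using hasFinsum_of_forall_ne_eq_zero
      (f := fun p => (Pi.single p 1 : ι → R) i * v p) i
      fun p hp => by simp [Pi.single_eq_of_ne hp.symm]
  | zero => simp [HasFinsum, Function.HasFiniteSupport]
  | add l m _ _ hl hm => simpa only [LinearMap.add_apply, add_mul] using hl.add hm
  | smul c l _ hl => simpa only [LinearMap.smul_apply, smul_eq_mul, mul_assoc] using hl.const_mul c

variable (R ι) in
/-- The operators on `ι → R` given by matrices with finitely many nonzero entries in each row. -/
def rowFinite : Subalgebra R (Module.End R (ι → R)) where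
  carrier := {T | ∀ i, coord i ∘ₗ T ∈ coordinateSpan ι R}
  mul_mem' {T U} hT hU i := by
    have hcomp : coordinateSpan ι R ≤ (coordinateSpan ι R).comap (LinearMap.lcomp R R U) :=
      Submodule.span_le.2 (Set.range_subset_iff.2 hU)
    exact hcomp (hT i)
  add_mem' hT hU i := by
    simpa only [LinearMap.comp_add] using add_mem (hT i) (hU i)
  algebraMap_mem' c i := by
    rw [Algebra.algebraMap_eq_smul_one, LinearMap.comp_smul]
    exact Submodule.smul_mem _ c (coord_mem_coordinateSpan i)

lemma smulRight_mem_rowFinite {l : Module.Dual R (ι → R)} (hl : l ∈ coordinateSpan ι R)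
    (v : ι → R) : l.smulRight v ∈ rowFinite ι R := fun i => by
  have hrow : coord i ∘ₗ l.smulRight v = v i • l := by
    ext; simp [mul_comm]
  exact hrow ▸ Submodule.smul_mem _ _ hl

lemma hasFinsum_of_mem_rowFinite [DecidableEq ι] {T : Module.End R (ι → R)}
    (hT : T ∈ rowFinite ι R) (v : ι → R) (i : ι) :
    HasFinsum (fun p => T (Pi.single p 1) i * v p) (T v i) :=
  hasFinsum_of_mem_coordinateSpan (hT i) v

end FiniteSums

section HaantjesTorsion

variable {R V : Type*} [CommRing R] [AddCommGroup V] [Module R V]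

/-- The Nijenhuis torsion `D_{AX}A Y - D_{AY}A X - A (D_X A Y - D_Y A X)` at a point where the
operator field takes the value `A` and has directional derivatives `D_X A = D X`. -/
def nijenhuisTorsion (A : Module.End R V) (D : V →ₗ[R] V →ₗ[R] V) (X Y : V) : V :=
  D (A X) Y - D (A Y) X - A (D X Y - D Y X)

/-- The Haantjes expression `N(AX, AY) - A N(X, AY) - A N(AX, Y) + A² N(X, Y)`, for an arbitrary
bilinear map `N` in place of the Nijenhuis torsion of `A`. -/
def haantjesTorsion (A : Module.End R V) (N : V →ₗ[R] V →ₗ[R] V) (X Y : V) : V :=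
  N (A X) (A Y) - A (N X (A Y)) - A (N (A X) Y) + A (A (N X Y))

lemma haantjesTorsion_add (A : Module.End R V) (N N' : V →ₗ[R] V →ₗ[R] V) (X Y : V) :
    haantjesTorsion A (N + N') X Y = haantjesTorsion A N X Y + haantjesTorsion A N' X Y := by
  simp only [haantjesTorsion, LinearMap.add_apply, map_add]
  abel

/-- The vector-valued two-form `α ∧ B : (X, Y) ↦ α(X) B Y - α(Y) B X`. -/
def wedgeEnd (α : Module.Dual R V) (B : Module.End R V) : V →ₗ[R] V →ₗ[R] V :=
  α.smulRight B - (α.smulRight B).flip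

lemma wedgeEnd_apply (α : Module.Dual R V) (B : Module.End R V) (X : V) :
    wedgeEnd α B X = α X • B - α.smulRight (B X) := by
  ext; simp [wedgeEnd]

lemma wedgeEnd_flip (α : Module.Dual R V) (B : Module.End R V) :
    (wedgeEnd α B).flip = -wedgeEnd α B := by
  ext; simp [wedgeEnd]

lemma haantjesTorsion_wedgeEnd {A B : Module.End R V} (hAB : Commute A B) (α : Module.Dual R V)
    (X Y : V) : haantjesTorsion A (wedgeEnd α B) X Y = 0 := by
  have hcomm (Z : V) : A (B Z) = B (A Z) := LinearMap.congr_fun hAB Z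
  simp only [haantjesTorsion, wedgeEnd_apply, LinearMap.sub_apply, LinearMap.smul_apply,
    LinearMap.smulRight_apply, map_sub, map_smul, hcomm]
  abel

variable {ι : Type*}

lemma wedgeEnd_mem_rowFinite {α : Module.Dual R (ι → R)} {B : Module.End R (ι → R)}
    (hα : α ∈ coordinateSpan ι R) (hB : B ∈ rowFinite ι R) (X : ι → R) :
    wedgeEnd α B X ∈ rowFinite ι R := by
  rw [wedgeEnd_apply]
  exact sub_mem (Subalgebra.smul_mem _ hB _) (smulRight_mem_rowFinite hα _)

lemma wedgeEnd_flip_mem_rowFinite {α : Module.Dual R (ι → R)} {B : Module.End R (ι → R)}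
    (hα : α ∈ coordinateSpan ι R) (hB : B ∈ rowFinite ι R) (Y : ι → R) :
    (wedgeEnd α B).flip Y ∈ rowFinite ι R := by
  rw [wedgeEnd_flip]
  exact neg_mem (wedgeEnd_mem_rowFinite hα hB Y)

lemma finsum_sub_finsum_eq_nijenhuisTorsion [DecidableEq ι] {A : Module.End R (ι → R)}
    {D : (ι → R) →ₗ[R] (ι → R) →ₗ[R] (ι → R)} (hA : A ∈ rowFinite ι R)
    (hD : ∀ Y, D.flip Y ∈ rowFinite ι R) (i j k : ι) :
    let e (p : ι) : ι → R := Pi.single p 1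
    ∑ᶠ p, (A (e j) p * D (e p) (e k) i - A (e k) p * D (e p) (e j) i)
        - ∑ᶠ p, A (e p) i * (D (e j) (e k) p - D (e k) (e j) p)
      = nijenhuisTorsion A D (e j) (e k) i := by
  intro e
  have hfirst := (hasFinsum_of_mem_rowFinite (hD (e k)) (A (e j)) i).sub
    (hasFinsum_of_mem_rowFinite (hD (e j)) (A (e k)) i)
  have hsecond := hasFinsum_of_mem_rowFinite hA (D (e j) (e k) - D (e k) (e j)) i
  simp only [mul_comm (A (e _) _) (D _ _ _)]
  exact congrArg₂ (· - ·) hfirst.2 hsecond.2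

lemma finsum_finsum_eq_haantjesTorsion [DecidableEq ι] {A : Module.End R (ι → R)}
    {N : (ι → R) →ₗ[R] (ι → R) →ₗ[R] (ι → R)} (hA : A ∈ rowFinite ι R)
    (hN : ∀ X, N X ∈ rowFinite ι R) (hN' : ∀ Y, N.flip Y ∈ rowFinite ι R) (i j k : ι) :
    let e (p : ι) : ι → R := Pi.single p 1
    ∑ᶠ p, ∑ᶠ r,
      (N (e p) (e r) i * A (e j) p * A (e k) r - N (e j) (e r) p * A (e p) i * A (e k) r
        - N (e r) (e k) p * A (e p) i * A (e j) r + N (e j) (e k) p * A (e r) i * A (e p) r)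
      = haantjesTorsion A N (e j) (e k) i := by
  intro e
  have hinner (p : ι) : HasFinsum
      (fun r => N (e p) (e r) i * A (e j) p * A (e k) r - N (e j) (e r) p * A (e p) i * A (e k) r
        - N (e r) (e k) p * A (e p) i * A (e j) r + N (e j) (e k) p * A (e r) i * A (e p) r)
      (N (e p) (A (e k)) i * A (e j) p - A (e p) i * N (e j) (A (e k)) p
        - A (e p) i * N (A (e j)) (e k) p + A (A (e p)) i * N (e j) (e k) p) := by
    convert (((hasFinsum_of_mem_rowFinite (hN (e p)) (A (e k)) i).const_mul (A (e j) p)).sub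
      ((hasFinsum_of_mem_rowFinite (hN (e j)) (A (e k)) p).const_mul (A (e p) i))).sub
      ((hasFinsum_of_mem_rowFinite (hN' (e k)) (A (e j)) p).const_mul (A (e p) i)) |>.add
      ((hasFinsum_of_mem_rowFinite hA (A (e p)) i).const_mul (N (e j) (e k) p)) using 1
    · ext r
      simp only [LinearMap.flip_apply, e]
      ring
    · simp only [LinearMap.flip_apply]
      ring
  have houter := (((hasFinsum_of_mem_rowFinite (hN' (A (e k))) (A (e j)) i).sub
    (hasFinsum_of_mem_rowFinite hA (N (e j) (A (e k))) i)).sub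
    (hasFinsum_of_mem_rowFinite hA (N (A (e j)) (e k)) i)).add
    (hasFinsum_of_mem_rowFinite (mul_mem hA hA) (N (e j) (e k)) i)
  rw [finsum_congr fun p => (hinner p).2]
  exact houter.2

end HaantjesTorsion

section Chain

/-- The operator `(X)ᵢ ↦ cᵢ Xᵢ₊₁ + dᵢ Xᵢ₋₁`. -/
def neighborOp (c d : ℤ → ℝ) : Module.End ℝ (ℤ → ℝ) :=
  LinearMap.pi fun i => c i • coord (i + 1) + d i • coord (i - 1)

lemma neighborOp_mem_rowFinite (c d : ℤ → ℝ) : neighborOp c d ∈ rowFinite ℤ ℝ := fun i =>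
  add_mem (Submodule.smul_mem _ (c i) (coord_mem_coordinateSpan (i + 1)))
    (Submodule.smul_mem _ (d i) (coord_mem_coordinateSpan (i - 1)))

/-- The operator `S` flipping the sign of the coordinates of positive index. -/
def chainSign : Module.End ℝ (ℤ → ℝ) :=
  LinearMap.pi fun i => (if 1 ≤ i then (-1 : ℝ) else 1) • coord i

lemma chainSign_apply (X : ℤ → ℝ) (i : ℤ) :
    chainSign X i = (if 1 ≤ i then (-1 : ℝ) else 1) * X i := rfl

/-- The operator `K` for which `K u` is the part of column `0` of the chain matrix that is linear
in `u`. -/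
def chainColumn : Module.End ℝ (ℤ → ℝ) :=
  neighborOp (fun i => if 1 ≤ i then i + 1 else if i ≤ -2 then i + 2 else 0)
    (fun i => if 1 ≤ i then 1 - i else -i)

lemma chainColumn_apply (X : ℤ → ℝ) (i : ℤ) : chainColumn X i =
    (if 1 ≤ i then (i : ℝ) + 1 else if i ≤ -2 then (i : ℝ) + 2 else 0) * X (i + 1)
      + (if 1 ≤ i then 1 - (i : ℝ) else -(i : ℝ)) * X (i - 1) := rfl

/-- The operator `M` for which `u⁰ M` is the part of the chain matrix next to the diagonal. -/
def chainBand : Module.End ℝ (ℤ → ℝ) :=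
  neighborOp (fun i => if 1 ≤ i then 1 else if i = -2 then 2 else if i ≤ -3 then 1 else 0)
    (fun i => if 2 ≤ i ∨ i ≤ -1 then 1 else 0)

lemma chainBand_apply (X : ℤ → ℝ) (i : ℤ) : chainBand X i =
    (if 1 ≤ i then 1 else if i = -2 then 2 else if i ≤ -3 then 1 else 0) * X (i + 1)
      + (if 2 ≤ i ∨ i ≤ -1 then 1 else 0) * X (i - 1) := rfl

/-- The symmetric form `u¹ X⁰ + u⁰ X¹`, so that `chainForm u` is the differential of `u⁰ u¹`. -/
def chainForm : (ℤ → ℝ) →ₗ[ℝ] Module.Dual ℝ (ℤ → ℝ) :=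
  (coord 0).smulRight (coord 1) + (coord 1).smulRight (coord 0)

@[simp]
lemma chainForm_apply (u X : ℤ → ℝ) : chainForm u X = u 0 * X 1 + u 1 * X 0 := rfl

/-- The chain matrix `A(u)` as an operator on columns. -/
def chainOp (u : ℤ → ℝ) : Module.End ℝ (ℤ → ℝ) :=
  (chainForm u).smulRight (chainSign u) + (coord 0).smulRight (chainColumn u)
    + u 0 • chainBand

lemma chainOp_apply (u X : ℤ → ℝ) :
    chainOp u X = chainForm u X • chainSign u + X 0 • chainColumn u + u 0 • chainBand X := rfl

lemma chainOp_single_apply (u : ℤ → ℝ) (i j : ℤ) :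
    chainOp u (Pi.single j 1) i = Achain u i j := by
  have hentry : chainOp u (Pi.single j 1) i = chainForm u (Pi.single j 1) * chainSign u i
      + (Pi.single j 1 : ℤ → ℝ) 0 * chainColumn u i + u 0 * chainBand (Pi.single j 1) i := rfl
  simp only [hentry, Achain, chainForm_apply, chainSign_apply, chainColumn_apply, chainBand_apply,
    Pi.single_apply]
  obtain h | h | rfl | rfl | rfl | rfl :
      i ≤ -3 ∨ 2 ≤ i ∨ i = -2 ∨ i = -1 ∨ i = 0 ∨ i = 1 := by omega
  iterate 2
    · simp (disch := omega) only [and_iff_right, if_pos, if_neg]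
      split_ifs <;> first | omega | ring1
  iterate 4
    · norm_num
      split_ifs <;> first | omega | ring1

/-- The directional derivative `X ↦ D_X A` of the chain matrix at `u`. -/
def chainDeriv (u : ℤ → ℝ) : (ℤ → ℝ) →ₗ[ℝ] Module.End ℝ (ℤ → ℝ) :=
  LinearMap.mk₂ ℝ
    (fun X Y => chainForm u Y • chainSign X + chainForm X Y • chainSign u + Y 0 • chainColumn X
      + X 0 • chainBand Y)
    (fun X X' Y => by simp only [map_add, LinearMap.add_apply, Pi.add_apply]; module)
    (fun c X Y => by simp only [map_smul, LinearMap.smul_apply, Pi.smul_apply, smul_eq_mul]; module)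
    (fun X Y Y' => by simp only [map_add, Pi.add_apply]; module)
    (fun c X Y => by simp only [map_smul, Pi.smul_apply, smul_eq_mul]; module)

lemma chainDeriv_apply (u X Y : ℤ → ℝ) :
    chainDeriv u X Y = chainForm u Y • chainSign X + chainForm X Y • chainSign u
      + Y 0 • chainColumn X + X 0 • chainBand Y := rfl

lemma chainOp_add_smul (u X Y : ℤ → ℝ) (s : ℝ) :
    chainOp (u + s • X) Y
      = chainOp u Y + s • chainDeriv u X Y + s ^ 2 • chainForm X Y • chainSign X := by
  simp only [chainOp_apply, chainDeriv_apply, map_add, map_smul, LinearMap.add_apply,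
    LinearMap.smul_apply, Pi.add_apply, Pi.smul_apply, smul_eq_mul]
  module

lemma pderivU_Achain (u : ℤ → ℝ) (i j m : ℤ) :
    pderivU (fun v => Achain v i j) u m = chainDeriv u (Pi.single m 1) (Pi.single j 1) i := by
  have hline (s : ℝ) : (fun l => u l + s * if l = m then 1 else 0) = u + s • Pi.single m 1 := by
    ext l; simp [Pi.single_apply]
  simp only [pderivU, hline, ← chainOp_single_apply, chainOp_add_smul, Pi.add_apply, Pi.smul_apply,
    smul_eq_mul]
  generalize chainOp u _ i = a, chainDeriv u _ _ i = b, chainForm _ _ * _ = c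
  simpa using (((hasDerivAt_id (0 : ℝ)).mul_const b).const_add a |>.fun_add
    (((hasDerivAt_id (0 : ℝ)).fun_pow 2).mul_const c)).deriv

lemma chainForm_mem_coordinateSpan (u : ℤ → ℝ) : chainForm u ∈ coordinateSpan ℤ ℝ :=
  add_mem (Submodule.smul_mem _ _ (coord_mem_coordinateSpan 1))
    (Submodule.smul_mem _ _ (coord_mem_coordinateSpan 0))

lemma chainSign_mem_rowFinite : chainSign ∈ rowFinite ℤ ℝ := fun i =>
  Submodule.smul_mem _ (if 1 ≤ i then (-1 : ℝ) else 1) (coord_mem_coordinateSpan i)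

lemma chainOp_mem_rowFinite (u : ℤ → ℝ) : chainOp u ∈ rowFinite ℤ ℝ :=
  add_mem (add_mem (smulRight_mem_rowFinite (chainForm_mem_coordinateSpan u) _)
    (smulRight_mem_rowFinite (coord_mem_coordinateSpan 0) _))
    (Subalgebra.smul_mem _ (neighborOp_mem_rowFinite _ _) _)

lemma chainForm_comm (u X : ℤ → ℝ) : chainForm u X = chainForm X u := by
  simp only [chainForm_apply]; ring

lemma chainDeriv_flip_mem_rowFinite (u Y : ℤ → ℝ) : (chainDeriv u).flip Y ∈ rowFinite ℤ ℝ := by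
  have hflip : (chainDeriv u).flip Y = chainForm u Y • chainSign
      + (chainForm Y).smulRight (chainSign u) + Y 0 • chainColumn
      + (coord 0).smulRight (chainBand Y) := by
    ext1 X
    simp [chainDeriv_apply, chainForm_comm Y X]
  rw [hflip]
  exact add_mem (add_mem (add_mem (Subalgebra.smul_mem _ chainSign_mem_rowFinite _)
    (smulRight_mem_rowFinite (chainForm_mem_coordinateSpan Y) _))
    (Subalgebra.smul_mem _ (neighborOp_mem_rowFinite _ _) _))
    (smulRight_mem_rowFinite (coord_mem_coordinateSpan 0) _)

lemma chainSign_chainSign (X : ℤ → ℝ) : chainSign (chainSign X) = X := by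
  ext i
  simp only [chainSign_apply]
  split_ifs <;> ring

lemma chainSign_chainColumn (X : ℤ → ℝ) :
    chainSign (chainColumn X) = chainColumn (chainSign X) := by
  ext i
  simp only [chainSign_apply, chainColumn_apply]
  split_ifs <;> first
    | omega
    | ring1
    | obtain rfl : i = 1 := (by omega)
      norm_num

lemma chainSign_chainBand (X : ℤ → ℝ) :
    chainSign (chainBand X) = chainBand (chainSign X) := by
  ext i
  simp only [chainSign_apply, chainBand_apply]
  split_ifs <;> first | omega | ring1

lemma chainColumn_chainBand (X : ℤ → ℝ) :
    chainColumn (chainBand X) = chainBand (chainColumn X) - chainBand (chainBand X)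
      + (4 : ℝ) • (X - X 0 • Pi.single 0 1) := by
  ext i
  obtain h | h | rfl | rfl | rfl | rfl | rfl | rfl :
      i ≤ -4 ∨ 3 ≤ i ∨ i = -3 ∨ i = -2 ∨ i = -1 ∨ i = 0 ∨ i = 1 ∨ i = 2 := by omega
  iterate 2
    · simp (disch := omega) only [chainColumn_apply, chainBand_apply, Pi.add_apply, Pi.sub_apply,
        Pi.smul_apply, smul_eq_mul, Pi.single_apply, if_pos, if_neg, add_sub_cancel_right,
        sub_add_cancel]
      push_cast
      ring
  iterate 6
    · norm_num [chainColumn_apply, chainBand_apply] <;> ring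

lemma chainSign_apply_zero (X : ℤ → ℝ) : chainSign X 0 = X 0 := by
  simp [chainSign_apply]

lemma chainSign_apply_one (X : ℤ → ℝ) : chainSign X 1 = -X 1 := by
  simp [chainSign_apply]

lemma chainColumn_apply_zero (X : ℤ → ℝ) : chainColumn X 0 = 0 := by
  simp [chainColumn_apply]

lemma chainColumn_apply_one (X : ℤ → ℝ) : chainColumn X 1 = 2 * X 2 := by
  norm_num [chainColumn_apply]

lemma chainBand_apply_zero (X : ℤ → ℝ) : chainBand X 0 = 0 := by
  simp [chainBand_apply]

lemma chainBand_apply_one (X : ℤ → ℝ) : chainBand X 1 = X 2 := by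
  simp [chainBand_apply]

/-- The closed form `(X, Y) ↦ α(X) A Y - α(Y) A X - 4 u⁰ (X⁰ Y - Y⁰ X)`, with `α = d(u⁰u¹)`, of
the Nijenhuis torsion of the chain matrix. -/
def chainTorsion (u : ℤ → ℝ) : (ℤ → ℝ) →ₗ[ℝ] (ℤ → ℝ) →ₗ[ℝ] (ℤ → ℝ) :=
  wedgeEnd (chainForm u) (chainOp u) + wedgeEnd (-(4 * u 0) • coord 0) 1

lemma nijenhuisTorsion_chainOp (u X Y : ℤ → ℝ) :
    nijenhuisTorsion (chainOp u) (chainDeriv u) X Y = chainTorsion u X Y := by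
  simp only [nijenhuisTorsion, chainTorsion, wedgeEnd_apply, LinearMap.add_apply,
    LinearMap.sub_apply, LinearMap.smul_apply, LinearMap.smulRight_apply, Module.End.one_apply,
    LinearMap.proj_apply, chainDeriv_apply, chainOp_apply, chainForm_apply, map_add, map_sub,
    map_smul, chainSign_chainSign, chainSign_chainColumn, chainSign_chainBand,
    chainColumn_chainBand, smul_eq_mul, chainSign_apply_zero, chainSign_apply_one,
    chainColumn_apply_zero, chainColumn_apply_one, chainBand_apply_zero, chainBand_apply_one]
  module

lemma nijenhuis_eq_chainTorsion (u : ℤ → ℝ) (i j k : ℤ) :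
    nijenhuis u i j k = chainTorsion u (Pi.single j 1) (Pi.single k 1) i := by
  rw [← nijenhuisTorsion_chainOp, ← finsum_sub_finsum_eq_nijenhuisTorsion (chainOp_mem_rowFinite u)
    (chainDeriv_flip_mem_rowFinite u)]
  simp only [nijenhuis, pderivU_Achain, chainOp_single_apply]

end Chain

/-- The Haantjes tensor of the hydrodynamic chain vanishes
identically, so the chain is diagonalisable. -/
theorem haantjes_of_hydrodynamic_chain_vanishes :
    ∀ (u : ℤ → ℝ) (i j k : ℤ), haantjes u i j k = 0 := by
  intro u i j k
  have hα := chainForm_mem_coordinateSpan u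
  have hβ := Submodule.smul_mem _ (-(4 * u 0)) (coord_mem_coordinateSpan (R := ℝ) (0 : ℤ))
  have hA := chainOp_mem_rowFinite u
  have hone := one_mem (rowFinite ℤ ℝ)
  have hN X : chainTorsion u X ∈ rowFinite ℤ ℝ :=
    add_mem (wedgeEnd_mem_rowFinite hα hA X) (wedgeEnd_mem_rowFinite hβ hone X)
  have hN' Y : (chainTorsion u).flip Y ∈ rowFinite ℤ ℝ :=
    add_mem (wedgeEnd_flip_mem_rowFinite hα hA Y) (wedgeEnd_flip_mem_rowFinite hβ hone Y)
  calc haantjes u i j k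
      = haantjesTorsion (chainOp u) (chainTorsion u) (Pi.single j 1) (Pi.single k 1) i := by
        rw [← finsum_finsum_eq_haantjesTorsion hA hN hN']
        simp only [haantjes, nijenhuis_eq_chainTorsion, chainOp_single_apply]
    _ = 0 := by
        rw [chainTorsion, haantjesTorsion_add, haantjesTorsion_wedgeEnd (Commute.refl _),
          haantjesTorsion_wedgeEnd (Commute.one_right _), add_zero, Pi.zero_apply]

end
end

section
/- Let w^{−1} : ℝ → ℝ and w^k_1 : ℝ → ℝ (k ≥ 1) be differentiable functions satisfying d w^{−1}/dt = (w^{−1})² c₁ w¹_1 and, for every k ≥ 1, d w^k_1/dt = w^{−1} ( c_{k+1} w^{k+1}_1 − c₁ w¹_1 w^k_1 + ((k c₁² − c_k²)/c_k) w^{k−1}_1 ) with w⁰_1 := 0. Define F_k := 2^k k! / √((2k)!) for k ≥ 1, and set W^{−1} := w^{−1} and W^k := w^k_1 / F_k for k ≥ 1, with W⁰ := 0. Then d W^{−1}/dt = 2 (W^{−1})² W¹ and, for every k ≥ 1, d W^k/dt = 2 W^{−1} ( (k+1) W^{k+1} − W¹ W^k − (k−1) W^{k−1} ). -/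
noncomputable section

/-- `c_m = √(2m(2m−1))` for `m ≥ 1` (and `c₀ = 0`). -/
def cc (m : ℕ) : ℝ := Real.sqrt (2 * (m : ℝ) * (2 * (m : ℝ) - 1))

/-- The rescaling factors `F_k = 2^k k! / √((2k)!)`. -/
def Fk (k : ℕ) : ℝ := 2 ^ k * (k.factorial : ℝ) / Real.sqrt ((2 * k).factorial : ℝ)

/-! The factors satisfy `F₀ = 1` and `c_{k+1} F_{k+1} = 2 (k+1) F_k`, while
`k c₁² − c_k² = −4k(k−1)`, so the recursion turns the lower coefficient into
`((k c₁² − c_k²) / c_k) F_{k−1} = −2 (k−1) F_k`. Substituting `w^k_1 = F_k W^k` into the lattice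
equation therefore produces `F_k` in every term, and cancelling it leaves the universal chain. -/

theorem cc_sq (m : ℕ) : cc m ^ 2 = 2 * (m : ℝ) * (2 * (m : ℝ) - 1) := by
  refine Real.sq_sqrt ?_
  rcases Nat.eq_zero_or_pos m with rfl | hm
  · simp
  · have : (1 : ℝ) ≤ m := by exact_mod_cast hm
    exact mul_nonneg (by linarith) (by linarith)

theorem cc_succ_pos (k : ℕ) : 0 < cc (k + 1) := by
  refine Real.sqrt_pos.2 ?_
  push_cast
  exact mul_pos (by positivity) (by linarith [k.cast_nonneg (α := ℝ)])

theorem Fk_pos (k : ℕ) : 0 < Fk k := by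
  unfold Fk
  positivity

theorem Fk_zero : Fk 0 = 1 := by
  simp [Fk]

theorem sqrt_factorial_two_mul_succ (k : ℕ) :
    √((2 * (k + 1)).factorial : ℝ) = cc (k + 1) * √((2 * k).factorial : ℝ) := by
  have hfactorial : ((2 * (k + 1)).factorial : ℝ) = cc (k + 1) ^ 2 * (2 * k).factorial := by
    rw [cc_sq, show 2 * (k + 1) = 2 * k + 1 + 1 by ring, Nat.factorial_succ, Nat.factorial_succ]
    push_cast
    ring
  rw [hfactorial, Real.sqrt_mul (sq_nonneg _), Real.sqrt_sq (cc_succ_pos k).le]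

theorem cc_succ_mul_Fk_succ (k : ℕ) :
    cc (k + 1) * Fk (k + 1) = 2 * ((k : ℝ) + 1) * Fk k := by
  have hcc := (cc_succ_pos k).ne'
  unfold Fk
  rw [sqrt_factorial_two_mul_succ, Nat.factorial_succ]
  push_cast
  field_simp
  ring

theorem cc_one_mul_Fk_one : cc 1 * Fk 1 = 2 := by
  simpa [Fk_zero] using cc_succ_mul_Fk_succ 0

theorem reducedPfaff_lower_coeff_mul_Fk (k : ℕ) :
    (((k + 1 : ℕ) : ℝ) * cc 1 ^ 2 - cc (k + 1) ^ 2) / cc (k + 1) * Fk k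
      = -(2 * (k : ℝ)) * Fk (k + 1) := by
  have hnumerator :
      ((k + 1 : ℕ) : ℝ) * cc 1 ^ 2 - cc (k + 1) ^ 2 = -(4 * (k : ℝ) * ((k : ℝ) + 1)) := by
    rw [cc_sq, cc_sq]
    push_cast
    ring
  rw [hnumerator, div_mul_eq_mul_div, div_eq_iff (cc_succ_pos k).ne']
  linear_combination 2 * (k : ℝ) * cc_succ_mul_Fk_succ k

section Velocity

variable {A : Type*} [Ring A] [Algebra ℝ A]

/-- The right-hand side of the reduced even Pfaff lattice equation for `w^k_1`, where `v` stands
for `w^{−1}` and `w k` for `w^k_1`. Meaningful for `k ≥ 1` only, `k - 1` being truncated. -/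
def reducedPfaffVelocity (v : A) (w : ℕ → A) (k : ℕ) : A :=
  v * (cc (k + 1) • w (k + 1) - cc 1 • w 1 * w k
    + (((k : ℝ) * cc 1 ^ 2 - cc k ^ 2) / cc k) • w (k - 1))

/-- The right-hand side of the universal chain equation for `W^k`, where `v` stands for `W^{−1}`.
Meaningful for `k ≥ 1` only, `k - 1` being truncated. -/
def universalChainVelocity (v : A) (W : ℕ → A) (k : ℕ) : A :=
  (2 : ℝ) • v *
    (((k : ℝ) + 1) • W (k + 1) - W 1 * W k - ((k : ℝ) - 1) • W (k - 1))

variable {w W : ℕ → A}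

theorem cc_one_smul_eq_two_smul (hw : ∀ k, 1 ≤ k → w k = Fk k • W k) :
    cc 1 • w 1 = (2 : ℝ) • W 1 := by
  rw [hw 1 le_rfl, smul_smul, cc_one_mul_Fk_one]

theorem cc_succ_smul_eq (hw : ∀ k, 1 ≤ k → w k = Fk k • W k) (k : ℕ) :
    cc (k + 1) • w (k + 1) = (2 * ((k : ℝ) + 1) * Fk k) • W (k + 1) := by
  rw [hw (k + 1) k.succ_pos, smul_smul, cc_succ_mul_Fk_succ]

theorem reducedPfaff_lower_coeff_smul_eq (hw : ∀ k, 1 ≤ k → w k = Fk k • W k) (k : ℕ) :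
    ((((k + 1 : ℕ) : ℝ) * cc 1 ^ 2 - cc (k + 1) ^ 2) / cc (k + 1)) • w k
      = (-(2 * (k : ℝ)) * Fk (k + 1)) • W k := by
  rcases Nat.eq_zero_or_pos k with rfl | hk
  · -- Both coefficients vanish, whatever `w 0` and `W 0` are.
    simp
  · rw [hw k hk, smul_smul, reducedPfaff_lower_coeff_mul_Fk]

theorem reducedPfaffVelocity_eq_smul_universalChainVelocity
    (hw : ∀ k, 1 ≤ k → w k = Fk k • W k) (v : A) {k : ℕ} (hk : 1 ≤ k) :
    reducedPfaffVelocity v w k = Fk k • universalChainVelocity v W k := by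
  obtain ⟨j, rfl⟩ := Nat.exists_eq_add_of_le' hk
  simp only [reducedPfaffVelocity, universalChainVelocity, Nat.add_sub_cancel]
  rw [cc_succ_smul_eq hw, cc_one_smul_eq_two_smul hw, reducedPfaff_lower_coeff_smul_eq hw,
    hw (j + 1) hk]
  push_cast
  simp only [mul_add, mul_sub, smul_mul_assoc, mul_smul_comm]
  module

end Velocity

theorem rescaled_reduced_pfaff_chain_general {𝕜 A : Type*} [NontriviallyNormedField 𝕜]
    [NormedRing A] [NormedAlgebra ℝ A] [NormedSpace 𝕜 A] [SMulCommClass 𝕜 ℝ A]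
    {v : 𝕜 → A} {w W : ℕ → 𝕜 → A} {t : 𝕜}
    (hv : HasDerivAt v (v t ^ 2 * cc 1 • w 1 t) t)
    (hw : ∀ k, 1 ≤ k → HasDerivAt (w k) (reducedPfaffVelocity (v t) (w · t) k) t)
    (hW : ∀ k, 1 ≤ k → ∀ s, W k s = (Fk k)⁻¹ • w k s) :
    HasDerivAt v ((2 : ℝ) • v t ^ 2 * W 1 t) t ∧
      ∀ k, 1 ≤ k → HasDerivAt (W k) (universalChainVelocity (v t) (W · t) k) t := by
  have hwW (k : ℕ) (hk : 1 ≤ k) : w k t = Fk k • W k t :=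
    (eq_inv_smul_iff₀ (Fk_pos k).ne').1 (hW k hk t) |>.symm
  refine ⟨hv.congr_deriv ?_, fun k hk => ?_⟩
  · rw [cc_one_smul_eq_two_smul (w := (w · t)) hwW, mul_smul_comm, smul_mul_assoc]
  · have hderiv := (hw k hk).const_smul (Fk k)⁻¹
    rw [reducedPfaffVelocity_eq_smul_universalChainVelocity hwW (v t) hk,
      inv_smul_smul₀ (Fk_pos k).ne'] at hderiv
    rwa [show W k = (Fk k)⁻¹ • w k from funext (hW k hk)]

/-- The rescaling `W^{−1} = w^{−1}`, `W^k = w^k_1 / F_k` (with `W⁰ = 0`)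
transforms the reduced even Pfaff lattice equations into the universal chain
`dW^{−1}/dt = 2 (W^{−1})² W¹`,
`dW^k/dt = 2 W^{−1} ((k+1) W^{k+1} − W¹ W^k − (k−1) W^{k−1})`. -/
theorem rescaled_reduced_pfaff_chain
    (wm1 : ℝ → ℝ) (w1 : ℕ → ℝ → ℝ)
    (hdm1 : Differentiable ℝ wm1)
    (hd1 : ∀ k : ℕ, 1 ≤ k → Differentiable ℝ (w1 k))
    (hw10 : ∀ t : ℝ, w1 0 t = 0)
    (hm1 : ∀ t : ℝ, deriv wm1 t = (wm1 t) ^ 2 * (cc 1 * w1 1 t))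
    (hk : ∀ k : ℕ, 1 ≤ k → ∀ t : ℝ,
      deriv (w1 k) t =
        wm1 t * (cc (k + 1) * w1 (k + 1) t - cc 1 * w1 1 t * w1 k t
          + (((k : ℝ) * (cc 1) ^ 2 - (cc k) ^ 2) / cc k) * w1 (k - 1) t))
    (Wm1 : ℝ → ℝ) (W : ℕ → ℝ → ℝ)
    (hWm1 : ∀ t : ℝ, Wm1 t = wm1 t)
    (hW0 : ∀ t : ℝ, W 0 t = 0)
    (hWk : ∀ k : ℕ, 1 ≤ k → ∀ t : ℝ, W k t = w1 k t / Fk k) :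
    (∀ t : ℝ, deriv Wm1 t = 2 * (Wm1 t) ^ 2 * W 1 t)
    ∧
    (∀ k : ℕ, 1 ≤ k → ∀ t : ℝ,
      deriv (W k) t =
        2 * Wm1 t *
          (((k : ℝ) + 1) * W (k + 1) t - W 1 t * W k t - ((k : ℝ) - 1) * W (k - 1) t)) := by
  obtain rfl : Wm1 = wm1 := funext hWm1
  have hchain (t : ℝ) := rescaled_reduced_pfaff_chain_general (W := W)
    ((hdm1 t).hasDerivAt.congr_deriv (hm1 t))
    (fun k hk1 => (hd1 k hk1 t).hasDerivAt.congr_deriv (hk k hk1 t))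
    (fun k hk1 s => (hWk k hk1 s).trans (div_eq_inv_mul _ _))
  exact ⟨fun t => (hchain t).1.deriv, fun k hk1 t => ((hchain t).2 k hk1).deriv⟩

end
end

section
/- Let u^{−1} : ℝ → ℝ and u^k : ℝ → ℝ (k ≥ 1) be differentiable functions of t satisfying d u^{−1}/dt = 2 (u^{−1})² u¹ and, for every k ≥ 1, d u^k/dt = 2 u^{−1} ( (k+1) u^{k+1} − u¹ u^k − (k−1) u^{k−1} ) (with u⁰ interpreted as 0 in the k = 1 equation). Define fields on ℝ²: û^{−k}(x, t) := 0 for every k ≥ 2; û^{−1}(x, t) := u^{−1}(t); û⁰(x, t) := 2 x u^{−1}(t); and û^k(x, t) := u^k(t) for k ≥ 1. Then the family {û^ℓ} (ℓ ∈ ℤ) is a solution of the hydrodynamic chain. -/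
noncomputable section

/-- Partial derivative with respect to the first (space) variable. -/
def pdx (f : ℝ → ℝ → ℝ) (x t : ℝ) : ℝ := deriv (fun x' => f x' t) x

/-- Partial derivative with respect to the second (time) variable. -/
def pdt (f : ℝ → ℝ → ℝ) (x t : ℝ) : ℝ := deriv (fun t' => f x t') t

/-- The hydrodynamic chain arising as the continuum limit of the reduced even Pfaff
lattice, for the fields `u^ℓ(x, t)`, `ℓ ∈ ℤ`. -/
def HydroChain (u : ℤ → ℝ → ℝ → ℝ) : Prop :=
  (∀ k : ℕ, 3 ≤ k → ∀ x t : ℝ,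
      pdt (u (-(k : ℤ))) x t =
        ((k : ℝ) * u (-(k : ℤ) - 1) x t - ((k : ℝ) - 2) * u (-(k : ℤ) + 1) x t
            + u (-(k : ℤ)) x t * u 1 x t) * pdx (u 0) x t
          + u 0 x t * u (-(k : ℤ)) x t * pdx (u 1) x t
          + u 0 x t * (pdx (u (-(k : ℤ) + 1)) x t + pdx (u (-(k : ℤ) - 1)) x t))
  ∧
  (∀ x t : ℝ,
      pdt (u (-2)) x t =
        (u (-2) x t * u 1 x t + 2 * u (-3) x t) * pdx (u 0) x t
          + u 0 x t * u (-2) x t * pdx (u 1) x t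
          + u 0 x t * pdx (u (-3)) x t + 2 * u 0 x t * pdx (u (-1)) x t)
  ∧
  (∀ x t : ℝ,
      pdt (u (-1)) x t =
        (u (-1) x t * u 1 x t + u (-2) x t) * pdx (u 0) x t
          + u 0 x t * u (-1) x t * pdx (u 1) x t
          + u 0 x t * pdx (u (-2)) x t)
  ∧
  (∀ x t : ℝ,
      pdt (u 0) x t =
        u 0 x t * u 1 x t * pdx (u 0) x t + (u 0 x t) ^ 2 * pdx (u 1) x t)
  ∧
  (∀ x t : ℝ,
      pdt (u 1) x t =
        (2 * u 2 x t - (u 1 x t) ^ 2) * pdx (u 0) x t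
          - u 0 x t * u 1 x t * pdx (u 1) x t + u 0 x t * pdx (u 2) x t)
  ∧
  (∀ k : ℕ, 2 ≤ k → ∀ x t : ℝ,
      pdt (u (k : ℤ)) x t =
        (((k : ℝ) + 1) * u ((k : ℤ) + 1) x t - ((k : ℝ) - 1) * u ((k : ℤ) - 1) x t
            - u (k : ℤ) x t * u 1 x t) * pdx (u 0) x t
          - u 0 x t * u (k : ℤ) x t * pdx (u 1) x t
          + u 0 x t * (pdx (u ((k : ℤ) + 1)) x t + pdx (u ((k : ℤ) - 1)) x t))

/-!
Only `u⁰` depends on `x`, and it does so linearly. Hence `∂ₓu⁰` is its slope and every other `∂ₓu^ℓ`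
vanishes, so that the chain collapses to ordinary differential equations in `t`, the equation for
`u⁰` being `x` times the one for its slope. The tail `ℓ ≤ -2` may be set to zero because `u⁻¹`
enters the equation for `u⁻²` only through `∂ₓu⁻¹ = 0`. The equations for `u⁻¹` and for the slope
are then the same linear equation `y' = (∂ₓu⁰ · u¹) y`, so the slope can be the constant multiple
`2u⁻¹`.
-/

theorem pdx_of_space_independent (f : ℝ → ℝ) (x t : ℝ) : pdx (fun _ t => f t) x t = 0 :=
  deriv_const x (f t)

theorem pdt_of_space_independent {f : ℝ → ℝ} {f' t : ℝ} (hf : HasDerivAt f f' t) (x : ℝ) :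
    pdt (fun _ t => f t) x t = f' :=
  hf.deriv

theorem pdx_mul_slope (a : ℝ → ℝ) (x t : ℝ) : pdx (fun x t => x * a t) x t = a t :=
  (hasDerivAt_mul_const (a t)).deriv

theorem pdt_mul_slope {a : ℝ → ℝ} {a' t : ℝ} (ha : HasDerivAt a a' t) (x : ℝ) :
    pdt (fun x t => x * a t) x t = x * a' :=
  (ha.const_mul x).deriv

/-- The family of fields that equal the space-independent `v ℓ` for `ℓ ≠ 0` and are linear in `x`
with slope `a` for `ℓ = 0`. The value `v 0` is discarded. -/
def linearAnsatz (a : ℝ → ℝ) (v : ℤ → ℝ → ℝ) : ℤ → ℝ → ℝ → ℝ :=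
  Function.update (fun ℓ _ t => v ℓ t) 0 (fun x t => x * a t)

/-- The system of ordinary differential equations to which the hydrodynamic chain reduces on
`linearAnsatz a v`. The separate equations of the chain for `u⁻²` and `u¹` are the cases `k = 2` of
`hasDerivAt_neg` and `k = 1` of `hasDerivAt_pos`; in the latter `v 0` has coefficient zero. -/
structure IsReducedChain (a : ℝ → ℝ) (v : ℤ → ℝ → ℝ) : Prop where
  hasDerivAt_slope (t : ℝ) : HasDerivAt a (a t ^ 2 * v 1 t) t
  hasDerivAt_neg_one (t : ℝ) :
    HasDerivAt (v (-1)) (a t * (v (-1) t * v 1 t + v (-2) t)) t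
  hasDerivAt_neg (k : ℕ) (hk : 2 ≤ k) (t : ℝ) :
    HasDerivAt (v (-(k : ℤ)))
      (a t * ((k : ℝ) * v (-(k : ℤ) - 1) t - ((k : ℝ) - 2) * v (-(k : ℤ) + 1) t
        + v (-(k : ℤ)) t * v 1 t)) t
  hasDerivAt_pos (k : ℕ) (hk : 1 ≤ k) (t : ℝ) :
    HasDerivAt (v (k : ℤ))
      (a t * (((k : ℝ) + 1) * v ((k : ℤ) + 1) t - v 1 t * v (k : ℤ) t
        - ((k : ℝ) - 1) * v ((k : ℤ) - 1) t)) t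

section LinearAnsatz

variable {a : ℝ → ℝ} {v : ℤ → ℝ → ℝ}

theorem linearAnsatz_zero : linearAnsatz a v 0 = fun x t => x * a t :=
  Function.update_self ..

theorem linearAnsatz_of_ne {ℓ : ℤ} (hℓ : ℓ ≠ 0) : linearAnsatz a v ℓ = fun _ t => v ℓ t :=
  Function.update_of_ne hℓ ..

namespace IsReducedChain

theorem hasDerivAt_neg_two (h : IsReducedChain a v) (t : ℝ) :
    HasDerivAt (v (-2)) (a t * (v (-2) t * v 1 t + 2 * v (-3) t)) t := by
  refine (h.hasDerivAt_neg 2 le_rfl t).congr_deriv ?_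
  simp only [Nat.cast_ofNat, Int.reduceNeg, Int.reduceSub, Int.reduceAdd]
  ring

theorem hasDerivAt_one (h : IsReducedChain a v) (t : ℝ) :
    HasDerivAt (v 1) (a t * (2 * v 2 t - v 1 t ^ 2)) t := by
  refine (h.hasDerivAt_pos 1 le_rfl t).congr_deriv ?_
  simp only [Nat.cast_one, Int.reduceSub, Int.reduceAdd]
  ring

theorem hydroChain_linearAnsatz (h : IsReducedChain a v) : HydroChain (linearAnsatz a v) := by
  refine ⟨fun k hk x t => ?_, fun x t => ?_, fun x t => ?_, fun x t => ?_, fun x t => ?_,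
    fun k hk x t => ?_⟩
  all_goals simp (disch := lia) only [linearAnsatz_zero, linearAnsatz_of_ne, pdx_mul_slope,
    pdx_of_space_independent]
  · rw [pdt_of_space_independent (h.hasDerivAt_neg k (by lia) t)]
    ring
  · rw [pdt_of_space_independent (h.hasDerivAt_neg_two t)]
    ring
  · rw [pdt_of_space_independent (h.hasDerivAt_neg_one t)]
    ring
  · rw [pdt_mul_slope (h.hasDerivAt_slope t)]
    ring
  · rw [pdt_of_space_independent (h.hasDerivAt_one t)]
    ring
  · rw [pdt_of_space_independent (h.hasDerivAt_pos k (by lia) t)]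
    ring

end IsReducedChain

end LinearAnsatz

section ExtendByZero

variable {w : ℝ → ℝ} {u : ℕ → ℝ → ℝ} {c : ℝ}

/-- The coefficient sequence of the ansatz: `w` in place of `u⁻¹`, zero below it, and `u` on the
nonnegative indices, its value at `0` being immaterial in `linearAnsatz`. -/
def extendByZero (w : ℝ → ℝ) (u : ℕ → ℝ → ℝ) (ℓ : ℤ) : ℝ → ℝ :=
  if ℓ ≤ -2 then 0 else if ℓ = -1 then w else u ℓ.toNat

theorem extendByZero_of_le {ℓ : ℤ} (hℓ : ℓ ≤ -2) : extendByZero w u ℓ = 0 :=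
  if_pos hℓ

theorem extendByZero_neg_one : extendByZero w u (-1) = w := rfl

theorem extendByZero_of_nonneg {ℓ : ℤ} (hℓ : 0 ≤ ℓ) : extendByZero w u ℓ = u ℓ.toNat := by
  rw [extendByZero, if_neg (by lia), if_neg (by lia)]

theorem isReducedChain_extendByZero
    (hw : ∀ t, HasDerivAt w (c * w t ^ 2 * u 1 t) t)
    (hu : ∀ k : ℕ, 1 ≤ k → ∀ t, HasDerivAt (u k)
      (c * w t * (((k : ℝ) + 1) * u (k + 1) t - u 1 t * u k t - ((k : ℝ) - 1) * u (k - 1) t)) t) :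
    IsReducedChain (fun t => c * w t) (extendByZero w u) where
  hasDerivAt_slope t := by
    refine ((hw t).const_mul c).congr_deriv ?_
    rw [extendByZero_of_nonneg zero_le_one, Int.toNat_one]
    ring
  hasDerivAt_neg_one t := by
    rw [extendByZero_neg_one]
    refine (hw t).congr_deriv ?_
    rw [extendByZero_of_nonneg zero_le_one, extendByZero_of_le le_rfl, Int.toNat_one,
      Pi.zero_apply]
    ring
  hasDerivAt_neg k hk t := by
    -- At `k = 2` the neighbour `u⁻¹` is not zero, but its coefficient `k - 2` is.
    have neighbour_eq_zero : ((k : ℝ) - 2) * extendByZero w u (-(k : ℤ) + 1) t = 0 := by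
      obtain rfl | hk := hk.eq_or_lt
      · rw [Nat.cast_ofNat, sub_self, zero_mul]
      · rw [extendByZero_of_le (by lia), Pi.zero_apply, mul_zero]
    rw [neighbour_eq_zero, extendByZero_of_le (ℓ := -(k : ℤ)) (by lia),
      extendByZero_of_le (ℓ := -(k : ℤ) - 1) (by lia)]
    simp [hasDerivAt_zero]
  hasDerivAt_pos k hk t := by
    simpa (disch := lia) only [extendByZero_of_nonneg, Int.pred_toNat, Int.toNat_natCast_add_one,
      Int.toNat_natCast, Int.toNat_one] using hu k hk t

theorem linearAnsatz_extendByZero :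
    linearAnsatz (fun t => c * w t) (extendByZero w u) = fun ℓ x t =>
      if ℓ ≤ -2 then 0
      else if ℓ = -1 then w t
      else if ℓ = 0 then c * x * w t
      else u ℓ.toNat t := by
  funext ℓ x t
  obtain rfl | hℓ := eq_or_ne ℓ 0
  · simp [linearAnsatz_zero, mul_left_comm, mul_assoc]
  · simp only [linearAnsatz_of_ne hℓ, extendByZero, if_neg hℓ]
    split_ifs <;> rfl

end ExtendByZero

/-- A solution of the universal one-dimensional chain of ODEs yields,
via the ansatz `û^{−k} = 0` (`k ≥ 2`), `û^{−1}(x,t) = u^{−1}(t)`,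
`û⁰(x,t) = 2x u^{−1}(t)`, `û^k(x,t) = u^k(t)` (`k ≥ 1`), a solution of the
hydrodynamic chain. -/
theorem ode_reduction_solves_hydro_chain
    (um1 : ℝ → ℝ) (uk : ℕ → ℝ → ℝ)
    (hdm1 : Differentiable ℝ um1)
    (hdk : ∀ k : ℕ, 1 ≤ k → Differentiable ℝ (uk k))
    (hm1 : ∀ t : ℝ, deriv um1 t = 2 * (um1 t) ^ 2 * uk 1 t)
    (hk : ∀ k : ℕ, 1 ≤ k → ∀ t : ℝ,
      deriv (uk k) t =
        2 * um1 t *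
          (((k : ℝ) + 1) * uk (k + 1) t - uk 1 t * uk k t - ((k : ℝ) - 1) * uk (k - 1) t)) :
    HydroChain (fun ℓ x t =>
      if ℓ ≤ -2 then 0
      else if ℓ = -1 then um1 t
      else if ℓ = 0 then 2 * x * um1 t
      else uk ℓ.toNat t) := by
  rw [← linearAnsatz_extendByZero]
  apply IsReducedChain.hydroChain_linearAnsatz
  refine isReducedChain_extendByZero (fun t => ?_) (fun k one_le_k t => ?_)
  · rw [← hm1]
    exact (hdm1 t).hasDerivAt
  · rw [← hk k one_le_k]
    exact (hdk k one_le_k t).hasDerivAt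

end
end

section
/- For all integers n ≥ 1 and k ≥ 1, the following identity holds: binom(n+k−1, k) · 4k(1−k) − binom(n+k−1, k−1) · 2n(2n−1) + binom(n+k−2, k−1) · (n+k−1) · (4n + 4k − 6) = 0. Equivalently, with c_m² := 2m(2m−1): binom(n+k−1, k) (k c₁² − c_k²) − binom(n+k−1, k−1) c_n² + binom(n+k−2, k−1) c_{n+k−1}² = 0. -/
/-!
Put `N = n + k - 1` and `M = C(N - 1, k - 1)`. The two absorption identities `k C(N, k) = N M` and
`n C(N, k - 1) = N M` turn every term into a multiple of `N M`. If `c_m² = m (α m + β)`, then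
`k c₁² - c_k² = α k (1 - k)`, so the coefficients of `N M` are `α (1 - k)`, `-(α n + β)` and
`α N + β`, which sum to zero. The Pfaff lattice is the case `α = 4`, `β = -2`.
-/

theorem add_one_mul_choose_add_add_one (a b : ℕ) :
    (a + 1) * (a + b + 1).choose b = (a + b + 1) * (a + b).choose b := by
  have absorption := Nat.choose_mul_succ_eq (a + b) b
  rw [show a + b + 1 - b = a + 1 by omega] at absorption
  linarith

theorem binomial_cancellation_identity_general {R : Type*} [CommRing R] (α β : R) {n k : ℕ}
    (hn : 1 ≤ n) (hk : 1 ≤ k) :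
    ((n + k - 1).choose k : R) * (k * (α + β) - k * (α * k + β))
        - ((n + k - 1).choose (k - 1) : R) * (n * (α * n + β))
        + ((n + k - 2).choose (k - 1) : R) * ((n + k - 1) * (α * (n + k - 1) + β)) = 0 := by
  obtain ⟨a, rfl⟩ := Nat.exists_eq_add_of_le' hn
  obtain ⟨b, rfl⟩ := Nat.exists_eq_add_of_le' hk
  rw [show a + 1 + (b + 1) - 1 = a + b + 1 by omega, show a + 1 + (b + 1) - 2 = a + b by omega,
    Nat.add_sub_cancel]
  have absorb_k : ((a : R) + b + 1) * (a + b).choose b = (a + b + 1).choose (b + 1) * (b + 1) :=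
    mod_cast congrArg (Nat.cast (R := R)) (Nat.add_one_mul_choose_eq (a + b) b)
  have absorb_n : ((a : R) + 1) * (a + b + 1).choose b = (a + b + 1) * (a + b).choose b :=
    mod_cast congrArg (Nat.cast (R := R)) (add_one_mul_choose_add_add_one a b)
  push_cast
  linear_combination (α * b) * absorb_k - (α * (a + 1) + β) * absorb_n

theorem sq_sqrt_two_mul_mul_two_mul_sub_one {x : ℝ} (hx : 1 / 2 ≤ x) :
    Real.sqrt (2 * x * (2 * x - 1)) ^ 2 = 2 * x * (2 * x - 1) :=
  Real.sq_sqrt (mul_nonneg (by linarith) (by linarith))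

/-- The key binomial cancellation in the inductive proof that
`w^k_n = C(n+k−1, k)(∏_{ℓ=1}^k c_ℓ/c_{n+k−ℓ}) w^k_1` solves the reduced even Pfaff
lattice: with `c_m = √(2m(2m−1))`, for all `n, k ≥ 1`,
`C(n+k−1,k)·4k(1−k) − C(n+k−1,k−1)·2n(2n−1) + C(n+k−2,k−1)·(n+k−1)(4n+4k−6) = 0`,
equivalently
`C(n+k−1,k)(k c₁² − c_k²) − C(n+k−1,k−1) c_n² + C(n+k−2,k−1) c_{n+k−1}² = 0`. -/
theorem binomial_cancellation_identity (n k : ℕ) (hn : 1 ≤ n) (hk : 1 ≤ k) :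
    (((n + k - 1).choose k : ℝ) * (4 * (k : ℝ) * (1 - (k : ℝ)))
        - ((n + k - 1).choose (k - 1) : ℝ) * (2 * (n : ℝ) * (2 * (n : ℝ) - 1))
        + ((n + k - 2).choose (k - 1) : ℝ) * ((n : ℝ) + (k : ℝ) - 1) *
            (4 * (n : ℝ) + 4 * (k : ℝ) - 6) = 0)
    ∧
    (((n + k - 1).choose k : ℝ) *
          ((k : ℝ) * Real.sqrt (2 * (1 : ℝ) * (2 * (1 : ℝ) - 1)) ^ 2
            - Real.sqrt (2 * (k : ℝ) * (2 * (k : ℝ) - 1)) ^ 2)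
        - ((n + k - 1).choose (k - 1) : ℝ) *
            Real.sqrt (2 * (n : ℝ) * (2 * (n : ℝ) - 1)) ^ 2
        + ((n + k - 2).choose (k - 1) : ℝ) *
            Real.sqrt (2 * ((n : ℝ) + (k : ℝ) - 1) * (2 * ((n : ℝ) + (k : ℝ) - 1) - 1)) ^ 2
      = 0) := by
  have hn' : (1 : ℝ) ≤ n := mod_cast hn
  have hk' : (1 : ℝ) ≤ k := mod_cast hk
  have cancellation := binomial_cancellation_identity_general (4 : ℝ) (-2) hn hk
  rw [sq_sqrt_two_mul_mul_two_mul_sub_one (x := 1) (by norm_num),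
    sq_sqrt_two_mul_mul_two_mul_sub_one (x := k) (by linarith),
    sq_sqrt_two_mul_mul_two_mul_sub_one (x := n) (by linarith),
    sq_sqrt_two_mul_mul_two_mul_sub_one (x := n + k - 1) (by linarith)]
  constructor <;> linear_combination cancellation
end

section
/- Let λ, u⁰, u¹, u², u³, u^{−1}, u^{−2} and d⁰, d¹, d², d³, d^{−1}, d^{−2} be real numbers with u⁰ ≠ 0, satisfying the contracted chain relations: λ d⁰ = u⁰ u¹ d⁰ + (u⁰)² d¹; λ d¹ = (2u² − (u¹)²) d⁰ − u⁰ u¹ d¹ + u⁰ d²; λ d² = (3u³ − u¹ − u² u¹) d⁰ − u⁰ u² d¹ + u⁰ (d¹ + d³); and λ d^{−1} = (u^{−1} u¹ + u^{−2}) d⁰ + u⁰ u^{−1} d¹ + u⁰ d^{−2}. Then: d¹ = ((λ − u¹ u⁰)/(u⁰)²) d⁰; d² = ((λ² − 2 u² (u⁰)²)/(u⁰)³) d⁰; d³ = (((u⁰)³ (2u¹ − 3u³) − (u⁰)² (1 + u²) λ + λ³)/(u⁰)⁴) d⁰; and d^{−2} = (λ/u⁰) d^{−1} − ((u^{−2}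 u⁰ + u^{−1} λ)/(u⁰)²) d⁰. -/
/-!
With `d⁰` and `d^{-1}` given, the system is triangular: each relation brings in one new unknown,
with a power of `u⁰` as coefficient. Scaling by further powers of `u⁰` therefore eliminates without
division, and gives `(u⁰) ^ (k + 1) * d^k = p_k(λ) * d⁰` for `k = 1, 2, 3`, where `p_k` is monic of
degree `k` in `λ` with coefficients polynomial in the fields. The relation for `d^{-1}` determines
`d^{-2}` once `d¹` is known.
-/

section CommRing

variable {R : Type*} [CommRing R] {lam u0 u1 u2 u3 um1 um2 d0 d1 d2 d3 dm1 dm2 : R}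

theorem sq_mul_d1_eq (e1 : lam * d0 = u0 * u1 * d0 + u0 ^ 2 * d1) :
    u0 ^ 2 * d1 = (lam - u1 * u0) * d0 := by
  linear_combination -e1

theorem cube_mul_d2_eq (e1 : lam * d0 = u0 * u1 * d0 + u0 ^ 2 * d1)
    (e2 : lam * d1 = (2 * u2 - u1 ^ 2) * d0 - u0 * u1 * d1 + u0 * d2) :
    u0 ^ 3 * d2 = (lam ^ 2 - 2 * u2 * u0 ^ 2) * d0 := by
  have solve_d2 : u0 * d2 = (lam + u1 * u0) * d1 - (2 * u2 - u1 ^ 2) * d0 := by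
    linear_combination -e2
  calc
    u0 ^ 3 * d2 = (lam + u1 * u0) * (u0 ^ 2 * d1) - u0 ^ 2 * (2 * u2 - u1 ^ 2) * d0 := by
      linear_combination u0 ^ 2 * solve_d2
    _ = (lam + u1 * u0) * ((lam - u1 * u0) * d0) - u0 ^ 2 * (2 * u2 - u1 ^ 2) * d0 := by
      rw [sq_mul_d1_eq e1]
    _ = (lam ^ 2 - 2 * u2 * u0 ^ 2) * d0 := by ring

theorem pow_four_mul_d3_eq (e1 : lam * d0 = u0 * u1 * d0 + u0 ^ 2 * d1)
    (e2 : lam * d1 = (2 * u2 - u1 ^ 2) * d0 - u0 * u1 * d1 + u0 * d2)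
    (e3 : lam * d2 = (3 * u3 - u1 - u2 * u1) * d0 - u0 * u2 * d1 + u0 * (d1 + d3)) :
    u0 ^ 4 * d3
      = (u0 ^ 3 * (2 * u1 - 3 * u3) - u0 ^ 2 * (1 + u2) * lam + lam ^ 3) * d0 := by
  have solve_d3 :
      u0 * d3 = lam * d2 + u0 * (u2 - 1) * d1 - (3 * u3 - u1 - u2 * u1) * d0 := by
    linear_combination -e3
  calc
    u0 ^ 4 * d3 = lam * (u0 ^ 3 * d2) + u0 ^ 2 * (u2 - 1) * (u0 ^ 2 * d1)
        - u0 ^ 3 * (3 * u3 - u1 - u2 * u1) * d0 := by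
      linear_combination u0 ^ 3 * solve_d3
    _ = lam * ((lam ^ 2 - 2 * u2 * u0 ^ 2) * d0)
        + u0 ^ 2 * (u2 - 1) * ((lam - u1 * u0) * d0)
        - u0 ^ 3 * (3 * u3 - u1 - u2 * u1) * d0 := by
      rw [cube_mul_d2_eq e1 e2, sq_mul_d1_eq e1]
    _ = (u0 ^ 3 * (2 * u1 - 3 * u3) - u0 ^ 2 * (1 + u2) * lam + lam ^ 3) * d0 := by ring

theorem sq_mul_dm2_eq (e1 : lam * d0 = u0 * u1 * d0 + u0 ^ 2 * d1)
    (e4 : lam * dm1 = (um1 * u1 + um2) * d0 + u0 * um1 * d1 + u0 * dm2) :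
    u0 ^ 2 * dm2 = u0 * lam * dm1 - (um2 * u0 + um1 * lam) * d0 := by
  have solve_dm2 : u0 * dm2 = lam * dm1 - (um1 * u1 + um2) * d0 - u0 * um1 * d1 := by
    linear_combination -e4
  calc
    u0 ^ 2 * dm2 = u0 * lam * dm1 - u0 * (um1 * u1 + um2) * d0 - um1 * (u0 ^ 2 * d1) := by
      linear_combination u0 * solve_dm2
    _ = u0 * lam * dm1 - u0 * (um1 * u1 + um2) * d0 - um1 * ((lam - u1 * u0) * d0) := by
      rw [sq_mul_d1_eq e1]
    _ = u0 * lam * dm1 - (um2 * u0 + um1 * lam) * d0 := by ring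

end CommRing

theorem contracted_chain_relations_general {K : Type*} [Field K]
    {lam u0 u1 u2 u3 um1 um2 d0 d1 d2 d3 dm1 dm2 : K}
    (hu0 : u0 ≠ 0)
    (e1 : lam * d0 = u0 * u1 * d0 + u0 ^ 2 * d1)
    (e2 : lam * d1 = (2 * u2 - u1 ^ 2) * d0 - u0 * u1 * d1 + u0 * d2)
    (e3 : lam * d2 = (3 * u3 - u1 - u2 * u1) * d0 - u0 * u2 * d1 + u0 * (d1 + d3))
    (e4 : lam * dm1 = (um1 * u1 + um2) * d0 + u0 * um1 * d1 + u0 * dm2) :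
    d1 = ((lam - u1 * u0) / u0 ^ 2) * d0
    ∧ d2 = ((lam ^ 2 - 2 * u2 * u0 ^ 2) / u0 ^ 3) * d0
    ∧ d3 = ((u0 ^ 3 * (2 * u1 - 3 * u3) - u0 ^ 2 * (1 + u2) * lam + lam ^ 3) / u0 ^ 4) * d0
    ∧ dm2 = (lam / u0) * dm1 - ((um2 * u0 + um1 * lam) / u0 ^ 2) * d0 := by
  refine ⟨?_, ?_, ?_, ?_⟩
  · field_simp
    linear_combination sq_mul_d1_eq e1
  · field_simp
    linear_combination cube_mul_d2_eq e1 e2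
  · field_simp
    linear_combination pow_four_mul_d3_eq e1 e2 e3
  · field_simp
    linear_combination sq_mul_dm2_eq e1 e4

/-- The contracted hydrodynamic-reduction relations for the chain
arising from the reduced even Pfaff lattice: from the components of
`λ ∂ᵢu^k = Σ_ℓ A^k_ℓ(u) ∂ᵢu^ℓ` for `k = 0, 1, 2, −1` one deduces the expressions of
`∂ᵢu¹, ∂ᵢu², ∂ᵢu³, ∂ᵢu^{−2}` used to derive the Gibbons–Tsarev system. -/
theorem contracted_chain_relations
    (lam u0 u1 u2 u3 um1 um2 d0 d1 d2 d3 dm1 dm2 : ℝ)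
    (hu0 : u0 ≠ 0)
    (e1 : lam * d0 = u0 * u1 * d0 + u0 ^ 2 * d1)
    (e2 : lam * d1 = (2 * u2 - u1 ^ 2) * d0 - u0 * u1 * d1 + u0 * d2)
    (e3 : lam * d2 = (3 * u3 - u1 - u2 * u1) * d0 - u0 * u2 * d1 + u0 * (d1 + d3))
    (e4 : lam * dm1 = (um1 * u1 + um2) * d0 + u0 * um1 * d1 + u0 * dm2) :
    d1 = ((lam - u1 * u0) / u0 ^ 2) * d0
    ∧ d2 = ((lam ^ 2 - 2 * u2 * u0 ^ 2) / u0 ^ 3) * d0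
    ∧ d3 = ((u0 ^ 3 * (2 * u1 - 3 * u3) - u0 ^ 2 * (1 + u2) * lam + lam ^ 3) / u0 ^ 4) * d0
    ∧ dm2 = (lam / u0) * dm1 - ((um2 * u0 + um1 * lam) / u0 ^ 2) * d0 :=
  contracted_chain_relations_general hu0 e1 e2 e3 e4
end
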